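/- arXiv:0903.4785 — 2 statements merged into one kernel-verified Lean document; each statement's English description precedes it below -/
import Mathlib

section
/- Let N ≥ 1, let w ≥ 2 be even, let n be an integer with 0 < n < w, and set ñ = w − n. Define R_n(z) = c_n^{−1}·Σ_{(a b; c d) ∈ Γ₀(N)} 1/((az+b)^{ñ+1}(cz+d)^{n+1}) for z in the upper half-plane, where c_n = (−1)^n·4πi·(2i)^{−w−1}·C(w,n). Then R_n is a cusp form of weight w+2 on Γ₀(N), and for every cusp form f of weight w+2 on Γ₀(N) one has r_n(f) = ⟨f, R_n⟩. -/
open MeasureTheory Complex Real ComplexConjugate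

noncomputable section

/-- The constant `c_n = (−1)^n·4πi·(2i)^{−w−1}·C(w,n)`. -/
def cconst (w n : ℕ) : ℂ :=
  (-1) ^ n * 4 * Real.pi * Complex.I * (2 * Complex.I) ^ (-(w : ℤ) - 1) * (w.choose n)

/-- `R_n(z) = c_n^{−1} Σ_{(a b; c d) ∈ Γ₀(N)} 1/((az+b)^{ñ+1}(cz+d)^{n+1})`. -/
def Rq (N w n : ℕ) (z : ℂ) : ℂ :=
  (cconst w n)⁻¹ * ∑' p : {p : ℤ × ℤ × ℤ × ℤ //
      p.1 * p.2.2.2 - p.2.1 * p.2.2.1 = 1 ∧ (N : ℤ) ∣ p.2.2.1},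
    1 / (((p.1.1 : ℂ) * z + (p.1.2.1 : ℂ)) ^ (w - n + 1) *
        ((p.1.2.2.1 : ℂ) * z + (p.1.2.2.2 : ℂ)) ^ (n + 1))

/-- Extension of a function on the upper half-plane to `ℂ` (by zero). -/
def toC (f : UpperHalfPlane → ℂ) : ℂ → ℂ :=
  fun z => if h : 0 < z.im then f ⟨z, h⟩ else 0

/-- A measurable fundamental domain `F ⊆ ℍ ⊆ ℂ` for the action of `Γ₀(N)` on the upper
half-plane by fractional linear transformations. -/
def IsFundDom (N : ℕ) (F : Set ℂ) : Prop :=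
  MeasurableSet F ∧ (∀ z ∈ F, 0 < z.im) ∧
    (∀ z : ℂ, 0 < z.im → ∃ a b c d : ℤ, a * d - b * c = 1 ∧ (N : ℤ) ∣ c ∧
      ((a : ℂ) * z + b) / ((c : ℂ) * z + d) ∈ F) ∧
    ∀ z ∈ F, ∀ a b c d : ℤ, a * d - b * c = 1 → (N : ℤ) ∣ c →
      ((a : ℂ) * z + b) / ((c : ℂ) * z + d) ∈ F →
      ((a : ℂ) * z + b) / ((c : ℂ) * z + d) = z

/-- The Petersson inner product `⟨f,g⟩ = ∫_F f(z)·conj(g(z))·(Im z)^w dx dy` relative to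
a fundamental domain `F`. -/
def pet (w : ℕ) (F : Set ℂ) (f g : UpperHalfPlane → ℂ) : ℂ :=
  ∫ z in F, toC f z * conj (toC g z) * ((z.im : ℂ)) ^ w

/-- The period `r_n(f) = ∫₀^{i∞} f(z)·z^n dz` along the positive imaginary axis. -/
def periodInt (n : ℕ) (f : UpperHalfPlane → ℂ) : ℂ :=
  Complex.I * ∫ y in Set.Ioi (0 : ℝ),
    toC f (Complex.I * y) * (Complex.I * y) ^ n

/-!
Up to the factor `c_n⁻¹`, `R_n` is the Poincaré series of weight `w + 2` of `φ(z) = z^{-(ñ+1)}`.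
It converges because the squared lengths of the two rows of `γ ∈ SL(2, ℤ)` multiply to `1` plus the
square of their dot product. Unfolding turns `⟨f, R_n⟩` into an integral of `f · conj φ` over the
whole upper half-plane, twice since `±γ` act alike. In the coordinate `z = exp (s + it)` Cauchy's
theorem makes the integral over `s` independent of `t`; at `t = π/2` it is `r_n(f)`. What remains,
`∫ t in 0..π, e^{i(w-2n)t} sin^w t`, picks out one binomial coefficient of `(e^{it} - e^{-it})^w`.
-/

section CuspFormPeriods

open scoped MatrixGroups Manifold ENNReal Pointwise
open UpperHalfPlane ModularForm Filter Topology

section Unfolding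

variable {G α E : Type*} [Group G] [Countable G] [MulAction G α] [MeasurableSpace α]
  [MeasurableConstSMul G α] {μ : Measure α} {D : Set α} {m : ℕ}

lemma sum_restrict_smul_eq_smul (hD : MeasurableSet D)
    (hm : ∀ᵐ x ∂μ, {g : G | g⁻¹ • x ∈ D}.encard = m) :
    Measure.sum (fun g : G ↦ μ.restrict (g • D)) = (m : ℝ≥0∞) • μ := by
  classical
  have hgD (g : G) : MeasurableSet (g • D) := hD.const_smul g
  ext s hs
  calc Measure.sum (fun g : G ↦ μ.restrict (g • D)) s
      = ∑' g : G, ∫⁻ x in s, (g • D).indicator 1 x ∂μ := by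
        rw [Measure.sum_apply _ hs]
        refine tsum_congr fun g ↦ ?_
        rw [lintegral_indicator_one (hgD g), Measure.restrict_apply (hgD g),
          Measure.restrict_apply hs, Set.inter_comm]
    _ = ∫⁻ x in s, ∑' g : G, (g • D).indicator 1 x ∂μ :=
        (lintegral_tsum fun g ↦ (measurable_one.indicator (hgD g)).aemeasurable).symm
    _ = ∫⁻ _ in s, m ∂μ := by
        refine lintegral_congr_ae (ae_restrict_of_ae ?_)
        filter_upwards [hm] with x hx
        calc ∑' g : G, (g • D).indicator 1 x
            = ∑' g : G, {g : G | g⁻¹ • x ∈ D}.indicator (fun _ ↦ (1 : ℝ≥0∞)) g := by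
              simp [Set.indicator_apply, Set.mem_smul_set_iff_inv_smul_mem]
          _ = m := by rw [← tsum_subtype, ENNReal.tsum_set_one, hx]; rfl
    _ = ((m : ℝ≥0∞) • μ) s := by simp

lemma setIntegral_tsum_smul [SMulInvariantMeasure G α μ] [NormedAddCommGroup E]
    [NormedSpace ℝ E] (hD : MeasurableSet D)
    (hm : ∀ᵐ x ∂μ, {g : G | g⁻¹ • x ∈ D}.encard = m) {H : α → E} (hH : Integrable H μ) :
    ∫ x in D, ∑' g : G, H (g • x) ∂μ = m • ∫ x, H x ∂μ := by
  have hsum := sum_restrict_smul_eq_smul hD hm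
  have hmp (g : G) := measurePreserving_smul g μ
  have hemb (g : G) : MeasurableEmbedding fun x : α ↦ g • x := measurableEmbedding_const_smul g
  have hfin : ∑' g : G, ∫⁻ x in D, ‖H (g • x)‖ₑ ∂μ ≠ ∞ := by
    calc ∑' g : G, ∫⁻ x in D, ‖H (g • x)‖ₑ ∂μ = ∑' g : G, ∫⁻ x in g • D, ‖H x‖ₑ ∂μ :=
          tsum_congr fun g ↦ (hmp g).setLIntegral_comp_emb (hemb g) (‖H ·‖ₑ) D
      _ = m * ∫⁻ x, ‖H x‖ₑ ∂μ := by
          rw [← lintegral_sum_measure, hsum, lintegral_smul_measure, smul_eq_mul]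
      _ ≠ ∞ := ENNReal.mul_ne_top (by simp) hH.2.ne
  calc ∫ x in D, ∑' g : G, H (g • x) ∂μ = ∑' g : G, ∫ x in D, H (g • x) ∂μ :=
        integral_tsum (fun g ↦ (hH.1.comp_measurePreserving (hmp g)).restrict) hfin
    _ = ∑' g : G, ∫ x in g • D, H x ∂μ :=
        tsum_congr fun g ↦ ((hmp g).setIntegral_image_emb (hemb g) _ _).symm
    _ = m • ∫ x, H x ∂μ := by
        rw [← integral_sum_measure (by rw [hsum]; exact hH.smul_measure (by simp)), hsum,
          integral_smul_measure]
        simp [Nat.cast_smul_eq_nsmul]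

end Unfolding

section FundamentalSet

/-- A fundamental set for a group action: a set of representatives of the orbits. In contrast to
`MeasureTheory.IsFundamentalDomain`, nontrivial stabilizers are allowed, as is necessary for
subgroups of `SL(2, ℤ)` containing `-1`. -/
def IsFundamentalSet (G : Type*) {α : Type*} [Group G] [MulAction G α] (D : Set α) : Prop :=
  ∀ x : α, ∃! y, y ∈ MulAction.orbit G x ∧ y ∈ D

namespace IsFundamentalSet

lemma encard_inv_smul_mem_eq {G α : Type*} [Group G] [MulAction G α] {D : Set α}
    (hD : IsFundamentalSet G D) (x : α) :
    {g : G | g⁻¹ • x ∈ D}.encard = (MulAction.stabilizer G x : Set G).encard := by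
  obtain ⟨_, ⟨⟨g₀, rfl⟩, hg₀⟩, huniq⟩ := hD x
  have hmem (g : G) : g⁻¹ • x ∈ D ↔ g⁻¹ • x = g₀ • x :=
    ⟨fun h ↦ huniq _ ⟨⟨g⁻¹, rfl⟩, h⟩, fun h ↦ h ▸ hg₀⟩
  have himage : (· * g₀) '' {g : G | g⁻¹ • x ∈ D} = MulAction.stabilizer G x := by
    ext g
    rw [Set.image_mul_right, Set.mem_preimage, Set.mem_ofPred_eq, hmem, mul_inv_rev, inv_inv,
      mul_smul, smul_left_cancel_iff, inv_smul_eq_iff, eq_comm, SetLike.mem_coe,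
      MulAction.mem_stabilizer_iff]
  rw [← himage, (mul_left_injective g₀).encard_image]

end IsFundamentalSet

end FundamentalSet

section ModularAction

instance : Countable SL(2, ℤ) :=
  have : Countable (Matrix (Fin 2) (Fin 2) ℤ) := inferInstanceAs (Countable (Fin 2 → Fin 2 → ℤ))
  Subtype.countable

instance : NullSingletonClass (volume : Measure ℍ) := ⟨fun τ ↦ by
  rw [volume_eq_lintegral, Set.image_singleton]
  simp⟩

instance : SMulInvariantMeasure SL(2, ℤ) ℍ volume := ⟨fun γ _ hs ↦
  measure_preimage_smul_of_nullMeasurableSet hs.nullMeasurableSet (γ : GL (Fin 2) ℝ)⟩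

instance : MeasurableConstSMul SL(2, ℤ) ℍ := ⟨fun γ ↦
  (inferInstance : MeasurableConstSMul (GL (Fin 2) ℝ) ℍ).measurable_const_smul (γ : GL (Fin 2) ℝ)⟩

lemma subsingleton_setOf_smul_eq_self {g : GL (Fin 2) ℝ} (hg : 0 < g.val.det)
    (hgc : g ∉ Subgroup.center (GL (Fin 2) ℝ)) : {τ : ℍ | g • τ = τ}.Subsingleton := by
  intro τ hτ σ hσ
  have hell := isElliptic_of_exists_smul_eq_self hg hgc ⟨τ, hτ⟩
  rw [Set.mem_ofPred_eq, gl_smul_eq_self_iff_eq_fixedPt hg hell] at hτ hσ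
  rw [hτ, hσ]

lemma eq_one_or_eq_neg_one_of_coe_mem_center {γ : SL(2, ℤ)}
    (hγ : (γ : GL (Fin 2) ℝ) ∈ Subgroup.center (GL (Fin 2) ℝ)) : γ = 1 ∨ γ = -1 := by
  obtain ⟨a, ha⟩ := Matrix.GeneralLinearGroup.mem_center_iff_val_mem_range_scalar.mp hγ
  have hentry (i j : Fin 2) : (γ i j : ℝ) = if i = j then a else 0 := by
    simpa [Matrix.diagonal_apply] using (congrFun (congrFun ha i) j).symm
  have h01 : γ 0 1 = 0 := by simpa using hentry 0 1
  have h10 : γ 1 0 = 0 := by simpa using hentry 1 0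
  have h00 : γ 0 0 = γ 1 1 := by
    exact_mod_cast (hentry 0 0).trans (hentry 1 1).symm
  have hdet : γ 1 1 * γ 1 1 = 1 := by
    have := γ.det_coe
    rwa [Matrix.det_fin_two, h00, h01, zero_mul, sub_zero] at this
  refine (mul_self_eq_one_iff.mp hdet).imp (fun h ↦ ?_) (fun h ↦ ?_) <;>
  · ext i j
    fin_cases i <;> fin_cases j <;> simp [h00, h01, h10, h]

lemma ae_forall_smul_eq_self_imp :
    ∀ᵐ τ : ℍ, ∀ γ : SL(2, ℤ), γ • τ = τ → γ = 1 ∨ γ = -1 := by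
  rw [ae_all_iff]
  intro γ
  by_cases hγ : (γ : GL (Fin 2) ℝ) ∈ Subgroup.center (GL (Fin 2) ℝ)
  · exact .of_forall fun _ _ ↦ eq_one_or_eq_neg_one_of_coe_mem_center hγ
  · have hnull := (subsingleton_setOf_smul_eq_self
      ((γ : SL(2, ℝ)).det_coe.symm ▸ one_pos) hγ).measure_zero volume
    filter_upwards [measure_eq_zero_iff_ae_notMem.mp hnull] with τ hτ h
    exact absurd h hτ

lemma ae_encard_stabilizer_eq_two {Γ : Subgroup SL(2, ℤ)} (hΓ : -1 ∈ Γ) :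
    ∀ᵐ τ : ℍ, (MulAction.stabilizer Γ τ : Set Γ).encard = 2 := by
  have hne : (1 : Γ) ≠ ⟨-1, hΓ⟩ := fun h ↦ by
    simpa using congrArg (fun γ : Γ ↦ (γ : SL(2, ℤ)) 0 0) h
  filter_upwards [ae_forall_smul_eq_self_imp] with τ hτ
  rw [← Set.encard_pair hne]
  congr 1
  ext γ
  rw [SetLike.mem_coe, MulAction.mem_stabilizer_iff]
  refine ⟨fun h ↦ (hτ γ h).imp Subtype.ext Subtype.ext, ?_⟩
  rintro (rfl | rfl)
  · exact one_smul _ _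
  · exact (ModularGroup.SL_neg_smul 1 τ).trans (one_smul _ _)

lemma IsFundamentalSet.setIntegral_tsum_smul {Γ : Subgroup SL(2, ℤ)} (hΓ : -1 ∈ Γ) {D : Set ℍ}
    (hD : IsFundamentalSet Γ D) (hDm : MeasurableSet D) {H : ℍ → ℂ} (hH : Integrable H) :
    ∫ τ in D, ∑' γ : Γ, H (γ • τ) = 2 * ∫ τ, H τ := by
  have hcard : ∀ᵐ τ : ℍ, {γ : Γ | γ⁻¹ • τ ∈ D}.encard = (2 : ℕ) := by
    filter_upwards [ae_encard_stabilizer_eq_two hΓ] with τ hτ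
    rw [hD.encard_inv_smul_mem_eq, hτ, Nat.cast_ofNat]
  rw [_root_.setIntegral_tsum_smul hDm hcard hH, nsmul_eq_mul, Nat.cast_ofNat]

end ModularAction

section UpperHalfPlaneFunctions

lemma mdifferentiable_tsum_of_summable_norm {ι : Type*} {F : ι → ℍ → ℂ} (hF : ∀ i, MDiff (F i))
    (hbound : ∀ A B : ℝ, 0 < B →
      ∃ u : ι → ℝ, Summable u ∧ ∀ i, ∀ τ ∈ verticalStrip A B, ‖F i τ‖ ≤ u i) :
    MDiff (fun τ : ℍ ↦ ∑' i, F i τ) := by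
  rw [UpperHalfPlane.mdifferentiable_iff]
  intro z hz
  have hz : 0 < z.im := hz
  obtain ⟨u, hu, hle⟩ := hbound (|z.re| + 1) (z.im / 2) (half_pos hz)
  have hU : IsOpen {v : ℂ | |v.re| < |z.re| + 1 ∧ z.im / 2 < v.im} :=
    IsOpen.and (isOpen_lt (by fun_prop) (by fun_prop)) (isOpen_lt (by fun_prop) (by fun_prop))
  have hzU : z ∈ {v : ℂ | |v.re| < |z.re| + 1 ∧ z.im / 2 < v.im} :=
    ⟨lt_add_one _, half_lt_self hz⟩
  have hdiff := differentiableOn_tsum_of_summable_norm (F := fun i ↦ F i ∘ ofComplex) hu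
    (fun i ↦ (UpperHalfPlane.mdifferentiable_iff.mp (hF i)).mono
      fun v hv ↦ (half_pos hz).trans hv.2) hU fun i v hv ↦ ?_
  · exact (hdiff.differentiableAt (hU.mem_nhds hzU)).differentiableWithinAt
  · have hv0 : 0 < v.im := (half_pos hz).trans hv.2
    rw [Function.comp_apply, ofComplex_apply_of_im_pos hv0]
    exact hle i _ ⟨hv.1.le, hv.2.le⟩

lemma isZeroAtImInfty_of_T_smul {M : Type*} [Zero M] [TopologicalSpace M] {F : ℍ → M}
    (hT : ∀ (m : ℤ) (τ : ℍ), F (ModularGroup.T ^ m • τ) = F τ)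
    (hF : Tendsto F (atImInfty ⊓ 𝓟 (verticalStrip 1 1)) (𝓝 0)) : IsZeroAtImInfty F := by
  intro U hU
  have hev := hF hU
  rw [mem_map, mem_inf_principal] at hev
  obtain ⟨Y, hY⟩ := (atImInfty_mem _).mp hev
  refine (atImInfty_mem _).mpr ⟨max Y 1, fun τ hτ ↦ ?_⟩
  obtain ⟨m, hm⟩ := ModularGroup_T_zpow_mem_verticalStrip τ (N := 1) one_pos
  set σ := ModularGroup.T ^ (((1 : ℕ) : ℤ) * m) • τ with hσ
  have him : σ.im = τ.im := ModularGroup.im_T_zpow_smul _ _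
  rw [Set.mem_preimage, ← hT (((1 : ℕ) : ℤ) * m) τ, ← hσ]
  exact hY σ (him ▸ (le_max_left _ _).trans hτ)
    ⟨by exact_mod_cast hm.1, him ▸ (le_max_right _ _).trans hτ⟩

lemma slash_T_zpow_apply (k m : ℤ) (φ : ℍ → ℂ) (τ : ℍ) :
    (φ ∣[k] (ModularGroup.T ^ m)) τ = φ (ModularGroup.T ^ m • τ) := by
  have hd : denom (ModularGroup.T ^ m : SL(2, ℤ)) τ = 1 := by
    rw [ModularGroup.denom_apply, ModularGroup.coe_T_zpow]
    simp
  rw [SL_slash_apply, hd, one_zpow, mul_one]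

end UpperHalfPlaneFunctions

section PoincareSeries

/-- The Poincaré series `∑_{γ ∈ Γ} φ|_k γ`. The sum is over the whole group: `φ` is not required to
be invariant under a subgroup. -/
def poincareSeries (Γ : Subgroup SL(2, ℤ)) (k : ℤ) (φ : ℍ → ℂ) (τ : ℍ) : ℂ :=
  ∑' γ : Γ, (φ ∣[k] (γ : SL(2, ℤ))) τ

variable {Γ : Subgroup SL(2, ℤ)} {k : ℤ} {φ f : ℍ → ℂ}

lemma poincareSeries_slash_apply (δ : SL(2, ℤ)) (τ : ℍ) :
    (poincareSeries Γ k φ ∣[k] δ) τ = ∑' γ : Γ, (φ ∣[k] ((γ : SL(2, ℤ)) * δ)) τ := by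
  rw [SL_slash_apply, poincareSeries, ← tsum_mul_right]
  exact tsum_congr fun γ ↦ by rw [SlashAction.slash_mul, SL_slash_apply _ δ τ]

lemma poincareSeries_slash_of_mem {δ : SL(2, ℤ)} (hδ : δ ∈ Γ) :
    poincareSeries Γ k φ ∣[k] δ = poincareSeries Γ k φ := by
  funext τ
  rw [poincareSeries_slash_apply]
  exact (Equiv.mulRight (⟨δ, hδ⟩ : Γ)).tsum_eq (fun γ : Γ ↦ (φ ∣[k] (γ : SL(2, ℤ))) τ)

lemma IsFundamentalSet.setIntegral_petersson_poincareSeries (hΓ : -1 ∈ Γ) {D : Set ℍ}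
    (hD : IsFundamentalSet Γ D) (hDm : MeasurableSet D) (hf : ∀ γ ∈ Γ, f ∣[k] γ = f)
    (hφf : Integrable (petersson k φ f)) :
    ∫ τ in D, petersson k (poincareSeries Γ k φ) f τ = 2 * ∫ τ, petersson k φ f τ := by
  rw [← hD.setIntegral_tsum_smul hΓ hDm hφf]
  congr! with τ
  calc petersson k (poincareSeries Γ k φ) f τ
      = ∑' γ : Γ, petersson k (φ ∣[k] (γ : SL(2, ℤ))) f τ := by
        simp only [petersson, poincareSeries, Complex.conj_tsum, tsum_mul_right]
    _ = ∑' γ : Γ, petersson k φ f (γ • τ) := tsum_congr fun γ ↦ by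
        conv_lhs => rw [← hf γ γ.2]
        exact petersson_slash_SL k φ f γ τ

/-- Normal convergence on vertical strips of the series of all translates of `φ`, the condition
under which its Poincaré series are holomorphic. -/
def SlashSummable (k : ℤ) (φ : ℍ → ℂ) : Prop :=
  ∀ A B : ℝ, 0 < B → ∃ u : SL(2, ℤ) → ℝ, Summable u ∧
    ∀ γ : SL(2, ℤ), ∀ τ ∈ verticalStrip A B, ‖(φ ∣[k] γ) τ‖ ≤ u γ

namespace SlashSummable

lemma summable_norm (hφ : SlashSummable k φ) (τ : ℍ) :
    Summable fun γ : SL(2, ℤ) ↦ ‖(φ ∣[k] γ) τ‖ :=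
  have ⟨_, hu, hle⟩ := hφ |τ.re| τ.im τ.im_pos
  hu.of_nonneg_of_le (fun _ ↦ norm_nonneg _) fun γ ↦ hle γ τ ⟨le_rfl, le_rfl⟩

lemma mdifferentiable_poincareSeries (hφ : SlashSummable k φ) (hd : MDiff φ) :
    MDiff (poincareSeries Γ k φ) := by
  refine mdifferentiable_tsum_of_summable_norm (fun γ ↦ hd.slash k _) fun A B hB ↦ ?_
  obtain ⟨u, hu, hle⟩ := hφ A B hB
  exact ⟨fun γ : Γ ↦ u γ, hu.subtype _, fun γ ↦ hle γ⟩

lemma isZeroAtImInfty_tsum_norm (hφ : SlashSummable k φ)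
    (hlim : ∀ γ : SL(2, ℤ), Tendsto (φ ∣[k] γ) (atImInfty ⊓ 𝓟 (verticalStrip 1 1)) (𝓝 0)) :
    IsZeroAtImInfty fun τ : ℍ ↦ ∑' γ : SL(2, ℤ), ‖(φ ∣[k] γ) τ‖ := by
  refine isZeroAtImInfty_of_T_smul (fun m τ ↦ ?_) ?_
  · simp_rw [← slash_T_zpow_apply k m, ← SlashAction.slash_mul]
    exact (Equiv.mulRight (ModularGroup.T ^ m)).tsum_eq fun γ ↦ ‖(φ ∣[k] γ) τ‖
  · obtain ⟨u, hu, hle⟩ := hφ 1 1 one_pos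
    rw [← tsum_zero (β := SL(2, ℤ))]
    refine tendsto_tsum_of_dominated_convergence hu (fun γ ↦ by simpa using (hlim γ).norm) ?_
    filter_upwards [mem_inf_of_right (mem_principal_self _)] with τ hτ γ
    rw [norm_norm]
    exact hle γ τ hτ

lemma isZeroAtImInfty_poincareSeries_slash (hφ : SlashSummable k φ)
    (hlim : ∀ γ : SL(2, ℤ), Tendsto (φ ∣[k] γ) (atImInfty ⊓ 𝓟 (verticalStrip 1 1)) (𝓝 0))
    (δ : SL(2, ℤ)) : IsZeroAtImInfty (poincareSeries Γ k φ ∣[k] δ) := by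
  refine squeeze_zero_norm (fun τ ↦ ?_) (hφ.isZeroAtImInfty_tsum_norm hlim)
  have hs := hφ.summable_norm τ
  have hinj : Function.Injective fun γ : Γ ↦ (γ : SL(2, ℤ)) * δ :=
    fun _ _ h ↦ Subtype.ext (mul_right_cancel h)
  rw [poincareSeries_slash_apply]
  exact (norm_tsum_le_tsum_norm (hs.comp_injective hinj)).trans
    (tsum_comp_le_tsum_of_inj hs (fun _ ↦ norm_nonneg _) hinj)

end SlashSummable

/-- The Poincaré series of `φ` as a cusp form. -/
def poincareCuspForm (Γ : Subgroup SL(2, ℤ)) [Γ.FiniteIndex] (hφ : SlashSummable k φ)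
    (hd : MDiff φ)
    (hlim : ∀ γ : SL(2, ℤ), Tendsto (φ ∣[k] γ) (atImInfty ⊓ 𝓟 (verticalStrip 1 1)) (𝓝 0)) :
    CuspForm Γ k where
  toFun := poincareSeries Γ k φ
  slash_action_eq' := by
    rintro _ ⟨δ, hδ, rfl⟩
    exact poincareSeries_slash_of_mem hδ
  holo' := hφ.mdifferentiable_poincareSeries hd
  zero_at_cusps' hc := by
    rw [Subgroup.IsArithmetic.isCusp_iff_isCusp_SL2Z] at hc
    rw [OnePoint.isZeroAt_iff_forall_SL2Z hc]
    exact fun δ _ ↦ hφ.isZeroAtImInfty_poincareSeries_slash hlim δ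

end PoincareSeries

section RowCounting

/-- The squared Euclidean length of the `i`-th row of an integral matrix. -/
def rowNormSq (γ : SL(2, ℤ)) (i : Fin 2) : ℤ := γ i 0 ^ 2 + γ i 1 ^ 2

/-- The dot product of the rows of an integral matrix. -/
def rowDot (γ : SL(2, ℤ)) : ℤ := γ 0 0 * γ 1 0 + γ 0 1 * γ 1 1

variable {γ δ : SL(2, ℤ)} {i : Fin 2}

lemma entries_mul_sub_mul_eq_one (γ : SL(2, ℤ)) : γ 0 0 * γ 1 1 - γ 0 1 * γ 1 0 = 1 := by
  rw [← Matrix.det_fin_two, γ.det_coe]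

lemma rowNormSq_zero_mul_rowNormSq_one (γ : SL(2, ℤ)) :
    rowNormSq γ 0 * rowNormSq γ 1 = 1 + rowDot γ ^ 2 := by
  have h := entries_mul_sub_mul_eq_one γ
  simp only [rowNormSq, rowDot]
  linear_combination (γ 0 0 * γ 1 1 - γ 0 1 * γ 1 0 + 1) * h

lemma norm_row_pos (γ : SL(2, ℤ)) (i : Fin 2) : 0 < ‖γ i‖ :=
  norm_pos_iff.mpr (γ.row_ne_zero i)

lemma sq_norm_row_le_rowNormSq (γ : SL(2, ℤ)) (i : Fin 2) : ‖γ i‖ ^ 2 ≤ rowNormSq γ i := by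
  have hnonneg : 0 ≤ rowNormSq γ i := add_nonneg (sq_nonneg _) (sq_nonneg _)
  rw [← Real.le_sqrt (norm_nonneg _) (by exact_mod_cast hnonneg),
    pi_norm_le_iff_of_nonneg (Real.sqrt_nonneg _)]
  intro j
  refine Real.abs_le_sqrt ?_
  rw [rowNormSq]
  push_cast
  fin_cases j <;> simp [sq_nonneg]

lemma rowNormSq_le_two_mul_sq_norm_row (γ : SL(2, ℤ)) (i : Fin 2) :
    rowNormSq γ i ≤ 2 * ‖γ i‖ ^ 2 := by
  have h (j : Fin 2) : (γ i j : ℝ) ^ 2 ≤ ‖γ i‖ ^ 2 := by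
    rw [← sq_abs, ← Int.norm_eq_abs]
    gcongr
    exact norm_le_pi_norm (γ i) j
  rw [rowNormSq]
  push_cast
  linarith [h 0, h 1]

lemma rowNormSq_pos (γ : SL(2, ℤ)) (i : Fin 2) : 0 < rowNormSq γ i := by
  exact_mod_cast (pow_pos (norm_row_pos γ i) 2).trans_le (sq_norm_row_le_rowNormSq γ i)

lemma eq_of_lower_row_eq_of_rowDot_ediv_eq (h : γ 1 = δ 1)
    (hdiv : rowDot γ / rowNormSq γ 1 = rowDot δ / rowNormSq δ 1) : γ = δ := by
  have h0 : γ 1 0 = δ 1 0 := congrFun h 0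
  have h1 : γ 1 1 = δ 1 1 := congrFun h 1
  have hγ := entries_mul_sub_mul_eq_one γ
  have hδ := entries_mul_sub_mul_eq_one δ
  rw [h0, h1] at hγ
  obtain ⟨t, ht0, ht1⟩ : ∃ t, γ 0 0 = δ 0 0 + t * δ 1 0 ∧ γ 0 1 = δ 0 1 + t * δ 1 1 :=
    ⟨γ 0 1 * δ 0 0 - γ 0 0 * δ 0 1, by linear_combination -γ 0 0 * hδ + δ 0 0 * hγ,
      by linear_combination -γ 0 1 * hδ + δ 0 1 * hγ⟩
  have hnorm : rowNormSq γ 1 = rowNormSq δ 1 := by simp only [rowNormSq, h0, h1]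
  have hdot : rowDot γ = rowDot δ + t * rowNormSq δ 1 := by
    simp only [rowDot, rowNormSq, h0, h1, ht0, ht1]
    ring
  obtain rfl : t = 0 := by
    rwa [hnorm, hdot, Int.add_mul_ediv_right _ _ (rowNormSq_pos δ 1).ne', add_eq_left] at hdiv
  ext i j
  fin_cases i <;> fin_cases j <;> simp [h0, h1, ht0, ht1]

lemma sq_mul_one_add_sq_le {e k m : ℝ} (hem : e ^ 2 ≤ 1 + m ^ 2) (hk : k * e ≤ m)
    (hk' : m ≤ (k + 1) * e) : e ^ 2 * (1 + k ^ 2) ≤ 5 * (1 + m ^ 2) := by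
  have hdist : (m - k * e) ^ 2 ≤ e ^ 2 :=
    pow_le_pow_left₀ (sub_nonneg.mpr hk) (by linarith) 2
  have hke : (k * e) ^ 2 ≤ 2 * m ^ 2 + 2 * e ^ 2 := by nlinarith [sq_nonneg (2 * m - k * e)]
  linarith [mul_pow k e 2]

lemma inv_rowNormSq_mul_rowNormSq_le (hle : rowNormSq γ 1 ≤ rowNormSq γ 0) :
    ((rowNormSq γ 0 * rowNormSq γ 1 : ℤ) : ℝ)⁻¹ ≤
      ‖γ 1‖ ^ (-4 : ℝ) * (5 * (1 + ((rowDot γ / rowNormSq γ 1 : ℤ) : ℝ) ^ 2)⁻¹) := by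
  have hpos := rowNormSq_pos γ 1
  have hlower : ((rowDot γ / rowNormSq γ 1 : ℤ) : ℝ) * rowNormSq γ 1 ≤ rowDot γ := by
    exact_mod_cast Int.ediv_mul_le _ hpos.ne'
  have hupper : (rowDot γ : ℝ) ≤ ((rowDot γ / rowNormSq γ 1 : ℤ) + 1) * rowNormSq γ 1 := by
    exact_mod_cast (Int.lt_ediv_add_one_mul_self _ hpos).le
  have hsq : (rowNormSq γ 1 : ℝ) ^ 2 ≤ 1 + (rowDot γ : ℝ) ^ 2 := by
    have : rowNormSq γ 1 ^ 2 ≤ rowNormSq γ 0 * rowNormSq γ 1 := by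
      rw [sq]
      gcongr
    rw [rowNormSq_zero_mul_rowNormSq_one] at this
    exact_mod_cast this
  have h4 : ‖γ 1‖ ^ 4 ≤ (rowNormSq γ 1 : ℝ) ^ 2 := by
    calc ‖γ 1‖ ^ 4 = (‖γ 1‖ ^ 2) ^ 2 := by ring
      _ ≤ (rowNormSq γ 1 : ℝ) ^ 2 := by gcongr; exact sq_norm_row_le_rowNormSq γ 1
  have hγ := norm_row_pos γ 1
  set k : ℝ := ((rowDot γ / rowNormSq γ 1 : ℤ) : ℝ)
  rw [rowNormSq_zero_mul_rowNormSq_one, Real.rpow_neg hγ.le, Real.rpow_ofNat]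
  push_cast
  calc (1 + (rowDot γ : ℝ) ^ 2)⁻¹ = 5 * (5 * (1 + (rowDot γ : ℝ) ^ 2))⁻¹ := by field_simp
    _ ≤ 5 * (‖γ 1‖ ^ 4 * (1 + k ^ 2))⁻¹ := by
      refine mul_le_mul_of_nonneg_left (inv_anti₀ (by positivity) ?_) (by norm_num)
      exact (mul_le_mul_of_nonneg_right h4 (by positivity)).trans
        (sq_mul_one_add_sq_le hsq hlower hupper)
    _ = (‖γ 1‖ ^ 4)⁻¹ * (5 * (1 + k ^ 2)⁻¹) := by rw [mul_inv]; ring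

lemma summable_inv_one_add_int_sq : Summable fun k : ℤ ↦ (1 + (k : ℝ) ^ 2)⁻¹ := by
  refine ((Real.summable_one_div_int_pow (p := 2)).mpr one_lt_two).of_norm_bounded_eventually ?_
  filter_upwards [(Set.finite_singleton (0 : ℤ)).compl_mem_cofinite] with k hk
  have hk : (k : ℝ) ≠ 0 := Int.cast_ne_zero.mpr hk
  rw [norm_inv, Real.norm_of_nonneg (by positivity), one_div]
  gcongr
  exact le_add_of_nonneg_left zero_le_one

lemma summable_indicator_inv_rowNormSq_mul_rowNormSq :
    Summable ({γ | rowNormSq γ 1 ≤ rowNormSq γ 0}.indicator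
      fun γ : SL(2, ℤ) ↦ ((rowNormSq γ 0 * rowNormSq γ 1 : ℤ) : ℝ)⁻¹) := by
  have hinj : Function.Injective
      fun γ : SL(2, ℤ) ↦ ((γ 1, rowDot γ / rowNormSq γ 1) : (Fin 2 → ℤ) × ℤ) := fun γ δ h ↦
    have ⟨h1, h2⟩ := Prod.mk.inj h
    eq_of_lower_row_eq_of_rowDot_ediv_eq h1 h2
  have hsum := (Summable.mul_of_nonneg (f := fun v : Fin 2 → ℤ ↦ ‖v‖ ^ (-4 : ℝ))
    (EisensteinSeries.summable_one_div_norm_rpow (by norm_num))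
    (summable_inv_one_add_int_sq.mul_left 5) (fun _ ↦ by positivity)
    (fun _ ↦ by positivity)).comp_injective hinj
  refine hsum.of_nonneg_of_le (Set.indicator_nonneg fun γ _ ↦ ?_)
    (Set.indicator_le' (fun γ hγ ↦ inv_rowNormSq_mul_rowNormSq_le hγ) fun γ _ ↦ ?_)
  · exact_mod_cast (inv_pos.mpr (Int.cast_pos.mpr
      (mul_pos (rowNormSq_pos γ 0) (rowNormSq_pos γ 1)))).le
  · exact mul_nonneg (by positivity) (by positivity)

lemma rowNormSq_S_mul_zero (γ : SL(2, ℤ)) : rowNormSq (ModularGroup.S * γ) 0 = rowNormSq γ 1 := by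
  simp [rowNormSq, Matrix.SpecialLinearGroup.coe_mul, Matrix.mul_apply, ModularGroup.coe_S]

lemma rowNormSq_S_mul_one (γ : SL(2, ℤ)) : rowNormSq (ModularGroup.S * γ) 1 = rowNormSq γ 0 := by
  simp [rowNormSq, Matrix.SpecialLinearGroup.coe_mul, Matrix.mul_apply, ModularGroup.coe_S]

lemma summable_inv_rowNormSq_mul_rowNormSq :
    Summable fun γ : SL(2, ℤ) ↦ ((rowNormSq γ 0 * rowNormSq γ 1 : ℤ) : ℝ)⁻¹ := by
  have h := summable_indicator_inv_rowNormSq_mul_rowNormSq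
  have hnonneg (γ : SL(2, ℤ)) : 0 ≤ ((rowNormSq γ 0 * rowNormSq γ 1 : ℤ) : ℝ)⁻¹ :=
    inv_nonneg.mpr (Int.cast_nonneg (mul_pos (rowNormSq_pos γ 0) (rowNormSq_pos γ 1)).le)
  refine (h.add (h.comp_injective (mul_right_injective ModularGroup.S))).of_nonneg_of_le hnonneg
    fun γ ↦ ?_
  simp only [Function.comp_apply, Set.indicator_apply, Set.mem_ofPred_eq, rowNormSq_S_mul_zero,
    rowNormSq_S_mul_one]
  rw [mul_comm (rowNormSq γ 1)]
  have := hnonneg γ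
  split_ifs <;> linarith

lemma summable_inv_sq_norm_rows : Summable fun γ : SL(2, ℤ) ↦ (‖γ 0‖ ^ 2 * ‖γ 1‖ ^ 2)⁻¹ := by
  refine (summable_inv_rowNormSq_mul_rowNormSq.mul_left 4).of_nonneg_of_le
    (fun γ ↦ by positivity) fun γ ↦ ?_
  have h0 := norm_row_pos γ 0
  have h1 := norm_row_pos γ 1
  have e0 : (0 : ℝ) < rowNormSq γ 0 := Int.cast_pos.mpr (rowNormSq_pos γ 0)
  have e1 : (0 : ℝ) < rowNormSq γ 1 := Int.cast_pos.mpr (rowNormSq_pos γ 1)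
  calc (‖γ 0‖ ^ 2 * ‖γ 1‖ ^ 2)⁻¹ = 4 * (2 * ‖γ 0‖ ^ 2 * (2 * ‖γ 1‖ ^ 2))⁻¹ := by
        field_simp; norm_num
    _ ≤ 4 * ((rowNormSq γ 0 * rowNormSq γ 1 : ℤ) : ℝ)⁻¹ := by
        push_cast
        gcongr <;> exact rowNormSq_le_two_mul_sq_norm_row γ _

end RowCounting

section InversePower

/-- The function `z ↦ z^{-(p+1)}`, whose Poincaré series of weight `p + q + 2` is the series
`∑ 1/((az+b)^{p+1}(cz+d)^{q+1})`. -/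
def invPow (p : ℕ) (τ : ℍ) : ℂ := ((τ : ℂ) ^ (p + 1))⁻¹

variable {p q : ℕ} {A B : ℝ}

lemma mdifferentiable_invPow (p : ℕ) : MDiff (invPow p) := by
  rw [UpperHalfPlane.mdifferentiable_iff]
  have hd : DifferentiableOn ℂ (fun z : ℂ ↦ (z ^ (p + 1))⁻¹) {z | 0 < z.im} := fun z hz ↦
    ((differentiable_pow (p + 1)).differentiableAt.inv
      (pow_ne_zero _ fun h ↦ by simp [h] at hz)).differentiableWithinAt
  exact hd.congr fun z hz ↦ by
    rw [Function.comp_apply, ofComplex_apply_of_im_pos hz, invPow]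

lemma coe_smul_eq_div (γ : SL(2, ℤ)) (τ : ℍ) : ((γ • τ : ℍ) : ℂ) =
    (γ 0 0 * (τ : ℂ) + γ 0 1) / (γ 1 0 * (τ : ℂ) + γ 1 1) := by
  rw [UpperHalfPlane.coe_specialLinearGroup_apply]
  simp

lemma invPow_slash_apply (p q : ℕ) (γ : SL(2, ℤ)) (τ : ℍ) :
    (invPow p ∣[(p + q + 2 : ℤ)] γ) τ =
      1 / ((γ 0 0 * (τ : ℂ) + γ 0 1) ^ (p + 1) * (γ 1 0 * (τ : ℂ) + γ 1 1) ^ (q + 1)) := by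
  have hdenom : denom γ τ = γ 1 0 * (τ : ℂ) + γ 1 1 := ModularGroup.denom_apply γ τ
  have hne : γ 1 0 * (τ : ℂ) + γ 1 1 ≠ 0 := hdenom ▸ denom_ne_zero γ τ
  rw [SL_slash_apply, invPow, coe_smul_eq_div, hdenom, zpow_neg,
    show (p + q + 2 : ℤ) = ((p + 1 + (q + 1) : ℕ) : ℤ) by push_cast; ring, zpow_natCast,
    div_pow, inv_div, pow_add _ (p + 1)]
  field_simp

lemma mul_norm_row_le_norm_of_mem_verticalStrip (hB : 0 < B) (γ : SL(2, ℤ)) (i : Fin 2) {τ : ℍ}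
    (hτ : τ ∈ verticalStrip A B) :
    EisensteinSeries.r ⟨⟨A, B⟩, hB⟩ * ‖γ i‖ ≤ ‖γ i 0 * (τ : ℂ) + γ i 1‖ :=
  (mul_le_mul_of_nonneg_right (EisensteinSeries.r_lower_bound_on_verticalStrip τ hB hτ)
    (norm_nonneg _)).trans (EisensteinSeries.r_mul_max_le τ (γ.row_ne_zero i))

lemma one_le_norm_row (γ : SL(2, ℤ)) (i : Fin 2) : 1 ≤ ‖γ i‖ := by
  obtain ⟨j, hj⟩ := Function.ne_iff.mp (γ.row_ne_zero i)
  calc (1 : ℝ) ≤ ‖γ i j‖ := by rw [Int.norm_eq_abs]; exact_mod_cast Int.one_le_abs hj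
    _ ≤ ‖γ i‖ := norm_le_pi_norm (γ i) j

lemma norm_invPow_slash_le (hp : 1 ≤ p) (hq : 1 ≤ q) (hB : 0 < B) (γ : SL(2, ℤ)) {τ : ℍ}
    (hτ : τ ∈ verticalStrip A B) :
    ‖(invPow p ∣[(p + q + 2 : ℤ)] γ) τ‖ ≤
      ((EisensteinSeries.r ⟨⟨A, B⟩, hB⟩) ^ (p + q + 2))⁻¹ * (‖γ 0‖ ^ 2 * ‖γ 1‖ ^ 2)⁻¹ := by
  set r := EisensteinSeries.r ⟨⟨A, B⟩, hB⟩
  have hr : 0 < r := EisensteinSeries.r_pos _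
  have hrow := norm_row_pos γ
  rw [invPow_slash_apply, norm_div, norm_one, norm_mul, norm_pow, norm_pow, one_div, ← mul_inv]
  refine inv_anti₀ (by have := hrow 0; have := hrow 1; positivity) ?_
  calc r ^ (p + q + 2) * (‖γ 0‖ ^ 2 * ‖γ 1‖ ^ 2)
      ≤ r ^ (p + q + 2) * (‖γ 0‖ ^ (p + 1) * ‖γ 1‖ ^ (q + 1)) := by
        gcongr <;> first | exact one_le_norm_row γ _ | lia
    _ = (r * ‖γ 0‖) ^ (p + 1) * (r * ‖γ 1‖) ^ (q + 1) := by ring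
    _ ≤ _ := by gcongr <;> exact mul_norm_row_le_norm_of_mem_verticalStrip hB γ _ hτ

lemma slashSummable_invPow (hp : 1 ≤ p) (hq : 1 ≤ q) :
    SlashSummable (p + q + 2 : ℤ) (invPow p) := fun _ _ hB ↦
  ⟨_, summable_inv_sq_norm_rows.mul_left _, fun γ _ hτ ↦ norm_invPow_slash_le hp hq hB γ hτ⟩

lemma im_le_norm_mul_norm (γ : SL(2, ℤ)) (τ : ℍ) :
    τ.im ≤ ‖γ 0 0 * (τ : ℂ) + γ 0 1‖ * ‖γ 1 0 * (τ : ℂ) + γ 1 1‖ := by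
  have hdet : (γ 0 0 * γ 1 1 - γ 0 1 * γ 1 0 : ℝ) = 1 := by
    exact_mod_cast entries_mul_sub_mul_eq_one γ
  calc τ.im = ((γ 0 0 * (τ : ℂ) + γ 0 1) * conj (γ 1 0 * (τ : ℂ) + γ 1 1)).im := by
        simp only [map_add, map_mul, map_intCast, mul_im, add_im, add_re, mul_re,
          intCast_re, intCast_im, conj_re, conj_im, coe_re, coe_im]
        linear_combination -τ.im * hdet
    _ ≤ ‖γ 0 0 * (τ : ℂ) + γ 0 1‖ * ‖γ 1 0 * (τ : ℂ) + γ 1 1‖ := by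
        rw [← Complex.norm_conj (γ 1 0 * (τ : ℂ) + γ 1 1), ← norm_mul]
        exact im_le_norm _

lemma norm_invPow_slash_le_inv_im (p q : ℕ) (hB : 0 < B) (γ : SL(2, ℤ)) {τ : ℍ}
    (hτ : τ ∈ verticalStrip A B) :
    ‖(invPow p ∣[(p + q + 2 : ℤ)] γ) τ‖ ≤
      (EisensteinSeries.r ⟨⟨A, B⟩, hB⟩ ^ (p + q))⁻¹ * τ.im⁻¹ := by
  set r := EisensteinSeries.r ⟨⟨A, B⟩, hB⟩
  have hr : 0 < r := EisensteinSeries.r_pos _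
  have hrow (i : Fin 2) : r ≤ ‖γ i 0 * (τ : ℂ) + γ i 1‖ :=
    (le_mul_of_one_le_right hr.le (one_le_norm_row γ i)).trans
      (mul_norm_row_le_norm_of_mem_verticalStrip hB γ i hτ)
  have him := im_le_norm_mul_norm γ τ
  have := τ.im_pos
  rw [invPow_slash_apply, norm_div, norm_one, norm_mul, norm_pow, norm_pow, one_div, ← mul_inv]
  refine inv_anti₀ (by positivity) ?_
  calc r ^ (p + q) * τ.im
      ≤ ‖γ 0 0 * (τ : ℂ) + γ 0 1‖ ^ p * ‖γ 1 0 * (τ : ℂ) + γ 1 1‖ ^ q *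
        (‖γ 0 0 * (τ : ℂ) + γ 0 1‖ * ‖γ 1 0 * (τ : ℂ) + γ 1 1‖) := by
        rw [pow_add]
        gcongr
        exacts [hrow 0, hrow 1]
    _ = _ := by ring

lemma tendsto_invPow_slash (p q : ℕ) (γ : SL(2, ℤ)) (hB : 0 < B) :
    Tendsto (invPow p ∣[(p + q + 2 : ℤ)] γ) (atImInfty ⊓ 𝓟 (verticalStrip A B)) (𝓝 0) := by
  refine squeeze_zero_norm' (mem_inf_of_right fun τ hτ ↦
    norm_invPow_slash_le_inv_im p q hB γ hτ) ?_
  rw [← mul_zero (EisensteinSeries.r ⟨⟨A, B⟩, hB⟩ ^ (p + q))⁻¹]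
  exact ((tendsto_inv_atTop_zero.comp tendsto_comap).const_mul _).mono_left inf_le_left

/-- The Poincaré series of `z ↦ z^{-(p+1)}` of weight `p + q + 2`, as a cusp form. -/
def invPowCuspForm (Γ : Subgroup SL(2, ℤ)) [Γ.FiniteIndex] (hp : 1 ≤ p) (hq : 1 ≤ q) :
    CuspForm Γ (p + q + 2 : ℤ) :=
  poincareCuspForm Γ (slashSummable_invPow hp hq) (mdifferentiable_invPow p)
    fun γ ↦ tendsto_invPow_slash p q γ one_pos

end InversePower

section LogarithmicCoordinates

variable {E : Type*} [NormedAddCommGroup E] [NormedSpace ℝ E]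

lemma map_coe_comap_volume :
    ((volume : Measure ℂ).comap ((↑) : ℍ → ℂ)).map (↑) =
      (volume : Measure ℂ).restrict {z | 0 < z.im} := by
  rw [measurableEmbedding_coe.map_comap, range_coe]

lemma measurable_inv_im_sq :
    Measurable fun z : ℍ ↦ (1 / NNReal.mk z.im z.im_pos.le : NNReal) ^ 2 := by
  refine Measurable.pow_const (Measurable.const_div ?_ _) _
  exact (Complex.measurable_im.comp measurable_coe).subtype_mk

lemma setIntegral_preimage_coe (g : ℍ → E) {F : Set ℂ} (hF : MeasurableSet F)
    (hpos : F ⊆ {z | 0 < z.im}) :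
    ∫ τ in ((↑) : ℍ → ℂ) ⁻¹' F, g τ = ∫ z in F, (z.im ^ 2)⁻¹ • g (ofComplex z) := by
  have hrestrict : (volume : Measure ℂ).restrict F =
      (((volume : Measure ℂ).comap ((↑) : ℍ → ℂ)).map (↑)).restrict F := by
    rw [map_coe_comap_volume, Measure.restrict_restrict hF, Set.inter_eq_self_of_subset_left hpos]
  rw [volume_def, restrict_withDensity (measurable_coe hF),
    integral_withDensity_eq_integral_smul measurable_inv_im_sq, hrestrict,
    measurableEmbedding_coe.setIntegral_map]
  simp [NNReal.smul_def]

lemma integrable_iff_integrableOn_im_pos {g : ℍ → E} :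
    Integrable g ↔
      IntegrableOn (fun z : ℂ ↦ (z.im ^ 2)⁻¹ • g (ofComplex z)) {z | 0 < z.im} := by
  rw [volume_def, integrable_withDensity_iff_integrable_smul measurable_inv_im_sq,
    IntegrableOn, ← map_coe_comap_volume, measurableEmbedding_coe.integrable_map_iff]
  congr! with τ
  simp [NNReal.smul_def]

/-- The strip `0 < Im u < π`, which `u ↦ exp u` maps bijectively onto the upper half-plane. -/
def logStrip : Set ℂ := {u | u.im ∈ Set.Ioo 0 π}

lemma measurableSet_logStrip : MeasurableSet logStrip :=
  Complex.measurable_im measurableSet_Ioo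

lemma exp_im_pos {u : ℂ} (hu : u ∈ logStrip) : 0 < (Complex.exp u).im := by
  rw [Complex.exp_im]
  exact mul_pos (Real.exp_pos _) (Real.sin_pos_of_mem_Ioo hu)

lemma injOn_exp_logStrip : Set.InjOn Complex.exp logStrip := by
  intro u hu v hv h
  have := Real.pi_pos
  exact Complex.exp_inj_of_neg_pi_lt_of_le_pi (by linarith [hu.1]) hu.2.le
    (by linarith [hv.1]) hv.2.le h

lemma exp_image_logStrip : Complex.exp '' logStrip = {z | 0 < z.im} := by
  refine Set.Subset.antisymm (Set.image_subset_iff.mpr fun u hu ↦ exp_im_pos hu) fun z hz ↦ ?_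
  have hz : 0 < z.im := hz
  refine ⟨Complex.log z, ?_, Complex.exp_log fun h ↦ by simp [h] at hz⟩
  rw [logStrip, Set.mem_ofPred_eq, Complex.log_im]
  exact ⟨(Complex.arg_nonneg_iff.mpr hz.le).lt_of_ne'
      fun h ↦ hz.ne' (Complex.arg_eq_zero_iff.mp h).2,
    Complex.arg_lt_pi_iff.mpr (.inr hz.ne')⟩

lemma hasFDerivWithinAt_exp (u : ℂ) (S : Set ℂ) :
    HasFDerivWithinAt Complex.exp
      ((ContinuousLinearMap.toSpanSingleton ℂ (Complex.exp u)).restrictScalars ℝ) S u :=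
  ((Complex.hasDerivAt_exp u).hasFDerivAt.restrictScalars ℝ).hasFDerivWithinAt

lemma abs_det_exp (u : ℂ) :
    |((ContinuousLinearMap.toSpanSingleton ℂ (Complex.exp u)).restrictScalars ℝ).det| =
      Real.exp u.re ^ 2 := by
  simp [ContinuousLinearMap.det, LinearMap.det_restrictScalars, Algebra.norm_complex_eq,
    Complex.normSq_eq_norm_sq, Complex.norm_exp]

lemma exp_sq_mul_inv_im_exp_sq (u : ℂ) :
    Real.exp u.re ^ 2 * ((Complex.exp u).im ^ 2)⁻¹ = (Real.sin u.im ^ 2)⁻¹ := by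
  rw [Complex.exp_im, mul_pow, mul_inv,
    mul_inv_cancel_left₀ (pow_ne_zero 2 (Real.exp_pos _).ne')]

lemma integral_eq_setIntegral_logStrip (g : ℍ → E) :
    ∫ τ, g τ = ∫ u in logStrip, (Real.sin u.im ^ 2)⁻¹ • g (ofComplex (Complex.exp u)) := by
  have huniv : ((↑) : ℍ → ℂ) ⁻¹' {z | 0 < z.im} = Set.univ :=
    Set.eq_univ_of_forall fun τ ↦ τ.im_pos
  rw [← setIntegral_univ, ← huniv,
    setIntegral_preimage_coe g (measurableSet_lt measurable_const Complex.measurable_im)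
      subset_rfl, ← exp_image_logStrip,
    integral_image_eq_integral_abs_det_fderiv_smul volume measurableSet_logStrip
      (fun u _ ↦ hasFDerivWithinAt_exp u _) injOn_exp_logStrip]
  simp only [abs_det_exp, smul_smul, exp_sq_mul_inv_im_exp_sq]

lemma integrable_iff_integrableOn_logStrip {g : ℍ → E} :
    Integrable g ↔ IntegrableOn
      (fun u ↦ (Real.sin u.im ^ 2)⁻¹ • g (ofComplex (Complex.exp u))) logStrip := by
  rw [integrable_iff_integrableOn_im_pos, ← exp_image_logStrip,
    integrableOn_image_iff_integrableOn_abs_det_fderiv_smul volume measurableSet_logStrip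
      (fun u _ ↦ hasFDerivWithinAt_exp u _) injOn_exp_logStrip]
  simp only [abs_det_exp, smul_smul, exp_sq_mul_inv_im_exp_sq]

lemma measurableEquivRealProd_symm_preimage_logStrip :
    Complex.measurableEquivRealProd.symm ⁻¹' logStrip = Set.univ ×ˢ Set.Ioo 0 π := by
  ext p
  simp [logStrip]

lemma integrableOn_logStrip_iff {E : Type*} [NormedAddCommGroup E] {A : ℂ → E} :
    IntegrableOn A logStrip ↔ Integrable (fun p : ℝ × ℝ ↦ A (p.1 + p.2 * Complex.I))
      (volume.prod (volume.restrict (Set.Ioo 0 π))) := by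
  rw [← Complex.volume_preserving_equiv_real_prod.symm.integrableOn_comp_preimage
    (MeasurableEquiv.measurableEmbedding _), measurableEquivRealProd_symm_preimage_logStrip,
    IntegrableOn, Measure.volume_eq_prod, ← Measure.prod_restrict, Measure.restrict_univ]
  simp only [Function.comp_def, Complex.measurableEquivRealProd_symm_apply,
    Complex.mk_eq_add_mul_I]

lemma setIntegral_logStrip {A : ℂ → E} (hA : IntegrableOn A logStrip) :
    ∫ u in logStrip, A u = ∫ t in Set.Ioo 0 π, ∫ s : ℝ, A (s + t * Complex.I) := by
  rw [← integral_prod_symm _ (integrableOn_logStrip_iff.mp hA),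
    ← Complex.volume_preserving_equiv_real_prod.symm.setIntegral_preimage_emb
      (MeasurableEquiv.measurableEmbedding _), measurableEquivRealProd_symm_preimage_logStrip,
    Measure.volume_eq_prod, ← Measure.prod_restrict, Measure.restrict_univ]
  simp only [Complex.measurableEquivRealProd_symm_apply, Complex.mk_eq_add_mul_I]

end LogarithmicCoordinates

section Growth

variable {k : ℤ} {Γ : Subgroup (GL (Fin 2) ℝ)} [Γ.IsArithmetic]

lemma exists_norm_le_mul_rpow_neg_of_isBigO {f : ℍ → ℂ} {C a b : ℝ} (hab : a ≤ b)
    (hf : ∀ τ, ‖f τ‖ ≤ C / τ.im ^ a) (hO : f =O[atImInfty] fun τ ↦ τ.im ^ (-b)) :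
    ∃ D, 0 ≤ D ∧ ∀ τ, ‖f τ‖ ≤ D * τ.im ^ (-b) := by
  obtain ⟨D, hD⟩ := hO.bound
  obtain ⟨Y, hY⟩ := (atImInfty_mem _).mp hD
  have hC : 0 ≤ C := by simpa using (norm_nonneg _).trans (hf UpperHalfPlane.I)
  refine ⟨max D (C * max Y 1 ^ (b - a)), le_max_of_le_right (by positivity), fun τ ↦ ?_⟩
  have hy := τ.im_pos
  rcases le_total Y τ.im with h | h
  · calc ‖f τ‖ ≤ D * ‖τ.im ^ (-b)‖ := hY τ h
      _ = D * τ.im ^ (-b) := by rw [Real.norm_of_nonneg (by positivity)]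
      _ ≤ _ := by gcongr; exact le_max_left _ _
  · calc ‖f τ‖ ≤ C / τ.im ^ a := hf τ
      _ = C * τ.im ^ (b - a) * τ.im ^ (-b) := by
        rw [mul_assoc, ← Real.rpow_add hy, div_eq_mul_inv, ← Real.rpow_neg hy.le]
        ring_nf
      _ ≤ C * max Y 1 ^ (b - a) * τ.im ^ (-b) := by
        gcongr
        exact h.trans (le_max_left _ _)
      _ ≤ _ := by gcongr; exact le_max_right _ _

lemma exists_norm_cuspForm_le_mul_rpow_neg (f : CuspForm Γ k) {K : ℝ} (hK : (k / 2 : ℝ) ≤ K) :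
    ∃ C, 0 ≤ C ∧ ∀ τ : ℍ, ‖f τ‖ ≤ C * τ.im ^ (-K) := by
  obtain ⟨C, hC⟩ := CuspFormClass.exists_bound f
  obtain ⟨c, hc, hexp⟩ := CuspFormClass.exp_decay_atImInfty' f
  exact exists_norm_le_mul_rpow_neg_of_isBigO hK hC
    (hexp.trans ((isLittleO_exp_neg_mul_rpow_atTop hc (-K)).isBigO.comp_tendsto tendsto_comap))

open ConjAct Matrix.SpecialLinearGroup in
lemma exists_norm_cuspForm_slash_le_mul_rpow_neg (f : CuspForm Γ k) (γ : SL(2, ℤ)) {K : ℝ}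
    (hK : (k / 2 : ℝ) ≤ K) :
    ∃ C, 0 ≤ C ∧ ∀ τ : ℍ, ‖((f : ℍ → ℂ) ∣[k] γ) τ‖ ≤ C * τ.im ^ (-K) := by
  have : (toConjAct (γ : GL (Fin 2) ℝ)⁻¹ • Γ).IsArithmetic := by
    simpa [(show Rat.castHom ℝ = algebraMap ℚ ℝ by rfl), map_inv, map_mapGL]
      using! Subgroup.IsArithmetic.conj Γ (mapGL ℚ γ)⁻¹
  simpa only [CuspForm.coe_translate] using
    exists_norm_cuspForm_le_mul_rpow_neg (CuspForm.translate f γ) hK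

/-- The pullback of the differential form `f(z) z^n dz` under `z = exp u`. -/
def expPullback (n : ℕ) (f : ℍ → ℂ) (u : ℂ) : ℂ :=
  f (ofComplex (Complex.exp u)) * Complex.exp u ^ (n + 1)

lemma differentiableOn_expPullback (n : ℕ) {f : ℍ → ℂ} (hf : MDiff f) :
    DifferentiableOn ℂ (expPullback n f) logStrip :=
  ((UpperHalfPlane.mdifferentiable_iff.mp hf).comp Complex.differentiable_exp.differentiableOn
    fun _ ↦ exp_im_pos).mul (by fun_prop)

lemma norm_expPullback_le {f : ℍ → ℂ} {C K : ℝ} (hf : ∀ τ, ‖f τ‖ ≤ C * τ.im ^ (-K)) (n : ℕ)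
    {u : ℂ} (hu : u ∈ logStrip) :
    ‖expPullback n f u‖ ≤ C * Real.exp ((n + 1 - K) * u.re) * Real.sin u.im ^ (-K) := by
  have him := exp_im_pos hu
  have hsin := Real.sin_pos_of_mem_Ioo hu
  rw [expPullback, norm_mul, norm_pow, Complex.norm_exp, ofComplex_apply_of_im_pos him]
  calc ‖f ⟨Complex.exp u, him⟩‖ * Real.exp u.re ^ (n + 1)
      ≤ C * (Complex.exp u).im ^ (-K) * Real.exp u.re ^ (n + 1) := by
        gcongr
        exact hf _
    _ = C * (Real.exp (u.re * -K) * Real.exp ((n + 1 : ℕ) * u.re)) * Real.sin u.im ^ (-K) := by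
        rw [Complex.exp_im, Real.mul_rpow (Real.exp_pos _).le hsin.le, ← Real.exp_mul,
          Real.exp_nat_mul]
        ring
    _ = _ := by
        rw [← Real.exp_add]
        push_cast
        ring_nf

variable {p q : ℕ}

lemma pi_mul_I_sub_mem_logStrip {u : ℂ} (hu : u ∈ logStrip) : π * Complex.I - u ∈ logStrip := by
  simpa [logStrip, and_comm] using! hu

-- `u ↦ πi - u` is the involution `z ↦ -1/z` in logarithmic coordinates.
lemma expPullback_pi_mul_I_sub (f : ℍ → ℂ) {u : ℂ} (hu : u ∈ logStrip) :
    expPullback q f (π * Complex.I - u) =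
      (-1) ^ (q + 1) * expPullback p (f ∣[(p + q + 2 : ℤ)] ModularGroup.S) u := by
  have hexp : Complex.exp (π * Complex.I - u) = -(Complex.exp u)⁻¹ := by
    rw [Complex.exp_sub, Complex.exp_pi_mul_I, neg_div, one_div]
  have hS : ofComplex (Complex.exp (π * Complex.I - u)) =
      ModularGroup.S • ofComplex (Complex.exp u) := by
    rw [modular_S_smul, ofComplex_apply_of_im_pos (exp_im_pos (pi_mul_I_sub_mem_logStrip hu))]
    ext
    simp [ofComplex_apply_of_im_pos (exp_im_pos hu), hexp]
  have hden : denom ModularGroup.S (ofComplex (Complex.exp u)) = Complex.exp u := by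
    rw [ModularGroup.denom_apply, ofComplex_apply_of_im_pos (exp_im_pos hu)]
    simp [ModularGroup.S]
  have hne := Complex.exp_ne_zero u
  rw [expPullback, expPullback, hS, hexp, SL_slash_apply, hden, zpow_neg,
    show (p + q + 2 : ℤ) = ((p + 1 + (q + 1) : ℕ) : ℤ) by push_cast; ring, zpow_natCast,
    pow_add _ (p + 1), neg_pow, inv_pow]
  field_simp

lemma exists_norm_expPullback_le (f : CuspForm Γ (p + q + 2 : ℤ)) (hp : 1 ≤ p) (hq : 1 ≤ q) :
    ∃ C, 0 ≤ C ∧ ∀ u ∈ logStrip, ‖expPullback q f u‖ ≤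
      C * Real.exp (-|u.re| / 2) * Real.sin u.im ^ (-(p + q + 1 / 2 : ℝ)) := by
  have hp' : (1 : ℝ) ≤ p := by exact_mod_cast hp
  have hq' : (1 : ℝ) ≤ q := by exact_mod_cast hq
  have hK : ((p + q + 2 : ℤ) / 2 : ℝ) ≤ p + q + 1 / 2 := by push_cast; linarith
  obtain ⟨C, hC, hf⟩ := exists_norm_cuspForm_le_mul_rpow_neg f hK
  obtain ⟨D, -, hfS⟩ := exists_norm_cuspForm_slash_le_mul_rpow_neg f ModularGroup.S hK
  refine ⟨max C D, le_max_of_le_left hC, fun u hu ↦ ?_⟩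
  have hsin := Real.sin_pos_of_mem_Ioo hu
  rcases le_total 0 u.re with hs | hs
  · refine (norm_expPullback_le hf q hu).trans ?_
    rw [abs_of_nonneg hs]
    gcongr
    · exact le_max_left _ _
    · nlinarith
  · have hrefl := expPullback_pi_mul_I_sub (p := p) (q := q) f (pi_mul_I_sub_mem_logStrip hu)
    rw [sub_sub_cancel] at hrefl
    have hle := norm_expPullback_le hfS p (pi_mul_I_sub_mem_logStrip hu)
    rw [hrefl, norm_mul, norm_pow, norm_neg, norm_one, one_pow, one_mul, abs_of_nonpos hs]
    simp only [Complex.sub_re, Complex.sub_im, Complex.re_ofReal_mul, Complex.im_ofReal_mul,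
      Complex.I_re, Complex.I_im, mul_zero, mul_one, zero_sub, Real.sin_pi_sub] at hle
    refine hle.trans ?_
    gcongr
    · exact le_max_right _ _
    · nlinarith

end Growth

section ContourShift

variable {E : Type*} [NormedAddCommGroup E] [NormedSpace ℂ E] {G : ℂ → E} {b : ℝ → ℝ} {t₁ t₂ : ℝ}

lemma integrable_add_mul_I (hG : DifferentiableOn ℂ G {u | u.im ∈ Set.uIcc t₁ t₂})
    (hle : ∀ u, u.im ∈ Set.uIcc t₁ t₂ → ‖G u‖ ≤ b u.re) (hb : Integrable b) {t : ℝ}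
    (ht : t ∈ Set.uIcc t₁ t₂) : Integrable fun s : ℝ ↦ G (s + t * Complex.I) := by
  have hmem (s : ℝ) : (s + t * Complex.I).im ∈ Set.uIcc t₁ t₂ := by simpa using ht
  refine hb.mono' (hG.continuousOn.comp_continuous (by fun_prop) hmem).aestronglyMeasurable
    (.of_forall fun s ↦ ?_)
  simpa using hle _ (hmem s)

lemma tendsto_intervalIntegral_add_mul_I_zero
    (hle : ∀ u, u.im ∈ Set.uIcc t₁ t₂ → ‖G u‖ ≤ b u.re) (hb : Tendsto b (cocompact ℝ) (𝓝 0)) :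
    Tendsto (fun s : ℝ ↦ ∫ t in t₁..t₂, G (s + t * Complex.I)) (cocompact ℝ) (𝓝 0) := by
  refine squeeze_zero_norm (a := fun s ↦ b s * |t₂ - t₁|) (fun s ↦
    intervalIntegral.norm_integral_le_of_norm_le_const fun t ht ↦ ?_) ?_
  · simpa using hle (s + t * Complex.I) (by simpa using Set.uIoc_subset_uIcc ht)
  · simpa using hb.mul_const |t₂ - t₁|

lemma integral_add_mul_I_eq [CompleteSpace E]
    (hG : DifferentiableOn ℂ G {u | u.im ∈ Set.uIcc t₁ t₂})
    (hle : ∀ u, u.im ∈ Set.uIcc t₁ t₂ → ‖G u‖ ≤ b u.re) (hb : Integrable b)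
    (hb0 : Tendsto b (cocompact ℝ) (𝓝 0)) :
    ∫ s : ℝ, G (s + t₁ * Complex.I) = ∫ s : ℝ, G (s + t₂ * Complex.I) := by
  have hhor {t : ℝ} (ht : t ∈ Set.uIcc t₁ t₂) :=
    intervalIntegral_tendsto_integral (integrable_add_mul_I hG hle hb ht)
      tendsto_neg_atTop_atBot tendsto_id
  have hvert := tendsto_intervalIntegral_add_mul_I_zero hle hb0
  have hright := hvert.comp (tendsto_id.mono_right atTop_le_cocompact)
  have hleft := hvert.comp (tendsto_neg_atTop_atBot.mono_right atBot_le_cocompact)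
  have hrect (R : ℝ) : (∫ s in (-R)..R, G (s + t₁ * Complex.I)) -
      (∫ s in (-R)..R, G (s + t₂ * Complex.I)) +
      Complex.I • (∫ t in t₁..t₂, G (R + t * Complex.I)) -
      Complex.I • (∫ t in t₁..t₂, G ((-R : ℝ) + t * Complex.I)) = 0 := by
    have hsub : Set.uIcc (-R) R ×ℂ Set.uIcc t₁ t₂ ⊆ {u | u.im ∈ Set.uIcc t₁ t₂} := fun u hu ↦ hu.2
    simpa using Complex.integral_boundary_rect_eq_zero_of_differentiableOn G
      ((-R : ℝ) + t₁ * Complex.I) (R + t₂ * Complex.I) (hG.mono (by simpa using hsub))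
  have hlim := (((hhor Set.left_mem_uIcc).sub (hhor Set.right_mem_uIcc)).add
    (hright.const_smul Complex.I)).sub (hleft.const_smul Complex.I)
  simp only [smul_zero, add_zero, sub_zero] at hlim
  exact sub_eq_zero.mp (tendsto_nhds_unique (hlim.congr hrect) tendsto_const_nhds)

end ContourShift

section PeriodLine

lemma integrable_exp_neg_abs_div_two : Integrable fun s : ℝ ↦ Real.exp (-|s| / 2) := by
  rw [← integrableOn_univ, ← Set.Iic_union_Ioi (a := (0 : ℝ)), integrableOn_union]
  constructor
  · refine (integrableOn_exp_mul_Iic (a := 1 / 2) (by norm_num) 0).congr_fun (fun s hs ↦ ?_)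
      measurableSet_Iic
    simp only [abs_of_nonpos (Set.mem_Iic.mp hs)]
    ring_nf
  · refine (integrableOn_exp_mul_Ioi (a := -(1 / 2)) (by norm_num) 0).congr_fun (fun s hs ↦ ?_)
      measurableSet_Ioi
    simp only [abs_of_pos (Set.mem_Ioi.mp hs)]
    ring_nf

lemma tendsto_exp_neg_abs_div_two :
    Tendsto (fun s : ℝ ↦ Real.exp (-|s| / 2)) (cocompact ℝ) (𝓝 0) :=
  Real.tendsto_exp_atBot.comp
    ((tendsto_neg_atTop_atBot.comp (tendsto_norm_cocompact_atTop (E := ℝ))).atBot_div_const two_pos)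

lemma toC_eq_ofComplex (f : ℍ → ℂ) {z : ℂ} (hz : 0 < z.im) : toC f z = f (ofComplex z) := by
  rw [toC, dif_pos hz, ofComplex_apply_of_im_pos hz]

lemma integral_expPullback_pi_div_two (n : ℕ) (f : ℍ → ℂ) :
    ∫ s : ℝ, expPullback n f (s + (π / 2 : ℝ) * Complex.I) = periodInt n f := by
  rw [periodInt, ← Real.range_exp, ← Set.image_univ,
    integral_image_eq_integral_abs_deriv_smul MeasurableSet.univ
      (fun x _ ↦ (Real.hasDerivAt_exp x).hasDerivWithinAt) Real.exp_injective.injOn,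
    Measure.restrict_univ, ← integral_const_mul]
  refine integral_congr_ae (.of_forall fun s ↦ ?_)
  have hexp : Complex.exp (s + (π / 2 : ℝ) * Complex.I) = Complex.I * (Real.exp s : ℝ) := by
    rw [Complex.exp_add]
    push_cast
    rw [Complex.exp_pi_div_two_mul_I, mul_comm]
  simp only [expPullback, hexp, abs_of_pos (Real.exp_pos s), Complex.real_smul]
  rw [toC_eq_ofComplex f (by rw [Complex.I_mul_im, Complex.ofReal_re]; exact Real.exp_pos s)]
  ring

variable {p q : ℕ} {Γ : Subgroup (GL (Fin 2) ℝ)} [Γ.IsArithmetic]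

lemma integral_expPullback_eq_periodInt (f : CuspForm Γ (p + q + 2 : ℤ)) (hp : 1 ≤ p)
    (hq : 1 ≤ q) {t : ℝ} (ht : t ∈ Set.Ioo 0 π) :
    ∫ s : ℝ, expPullback q f (s + t * Complex.I) = periodInt q f := by
  obtain ⟨C, hC, hle⟩ := exists_norm_expPullback_le f hp hq
  have hsub : Set.uIcc t (π / 2) ⊆ Set.Ioo 0 π :=
    Set.OrdConnected.uIcc_subset inferInstance ht ⟨by positivity, half_lt_self Real.pi_pos⟩
  have hcont : ContinuousOn (fun x ↦ Real.sin x ^ (-(p + q + 1 / 2 : ℝ))) (Set.uIcc t (π / 2)) :=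
    Real.continuousOn_sin.rpow_const fun x hx ↦ .inl (Real.sin_pos_of_mem_Ioo (hsub hx)).ne'
  obtain ⟨M, hM⟩ := (isCompact_uIcc.image_of_continuousOn hcont).bddAbove
  rw [← integral_expPullback_pi_div_two]
  refine integral_add_mul_I_eq (b := fun s ↦ C * Real.exp (-|s| / 2) * M)
    ((differentiableOn_expPullback q f.holo').mono fun u hu ↦ hsub hu) (fun u hu ↦ ?_)
    ((integrable_exp_neg_abs_div_two.const_mul C).mul_const M) ?_
  · refine (hle u (hsub hu)).trans ?_
    gcongr
    exact hM ⟨_, hu, rfl⟩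
  · simpa using (tendsto_exp_neg_abs_div_two.const_mul C).mul_const M

end PeriodLine

section AngularIntegral

lemma intervalIntegrable_sin_rpow {r : ℝ} (hr : -1 < r) :
    IntervalIntegrable (fun t ↦ Real.sin t ^ r) volume 0 π := by
  have := Real.pi_pos
  have hsinc {t : ℝ} (ht : t ∈ Set.Icc 0 (π / 2)) : 0 < Real.sinc t := by
    rcases ht.1.eq_or_lt with rfl | h
    · simp
    · rw [Real.sinc_of_ne_zero h.ne']
      exact div_pos (Real.sin_pos_of_pos_of_lt_pi h (by linarith [ht.2])) h
  have hhalf : IntervalIntegrable (fun t ↦ Real.sin t ^ r) volume 0 (π / 2) := by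
    refine ((intervalIntegral.intervalIntegrable_rpow' hr).mul_continuousOn
      (g := fun t ↦ Real.sinc t ^ r) ?_).congr fun t ht ↦ ?_
    · rw [Set.uIcc_of_le (by positivity)]
      exact Real.continuous_sinc.continuousOn.rpow_const fun t ht ↦ .inl (hsinc ht).ne'
    · rw [Set.uIoc_of_le (by positivity)] at ht
      rw [← Real.mul_rpow ht.1.le (hsinc ⟨ht.1.le, ht.2⟩).le, Real.sinc_of_ne_zero ht.1.ne',
        mul_div_cancel₀ _ ht.1.ne']
  have hrefl := (hhalf.comp_sub_left π).symm
  rw [sub_zero, sub_half] at hrefl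
  simp only [Real.sin_pi_sub] at hrefl
  exact hhalf.trans hrefl

lemma sin_pow_eq_sum_exp (w : ℕ) (z : ℂ) :
    Complex.sin z ^ w = ((2 * Complex.I) ^ w)⁻¹ * ∑ k ∈ Finset.range (w + 1),
      (-1) ^ k * w.choose k * Complex.exp ((w - 2 * k) * (z * Complex.I)) := by
  have hsin : Complex.sin z = (2 * Complex.I)⁻¹ *
      (-Complex.exp (-z * Complex.I) + Complex.exp (z * Complex.I)) := by
    rw [Complex.sin]
    field_simp
    rw [Complex.I_sq]
    ring
  rw [hsin, mul_pow, add_pow, inv_pow]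
  congr 1
  refine Finset.sum_congr rfl fun k hk ↦ ?_
  have hexp : Complex.exp ((w - 2 * k) * (z * Complex.I)) =
      Complex.exp (-z * Complex.I) ^ k * Complex.exp (z * Complex.I) ^ (w - k) := by
    rw [← Complex.exp_nat_mul, ← Complex.exp_nat_mul, ← Complex.exp_add,
      Nat.cast_sub (Finset.mem_range_succ_iff.mp hk)]
    ring_nf
  rw [hexp, neg_pow]
  ring

lemma integral_exp_two_mul_int (j : ℤ) :
    ∫ t in (0 : ℝ)..π, Complex.exp (2 * j * Complex.I * t) = if j = 0 then (π : ℂ) else 0 := by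
  split_ifs with h
  · simp [h]
  · have hperiod : 2 * (j : ℂ) * Complex.I * π = j * (2 * π * Complex.I) := by ring
    rw [integral_exp_mul_complex (by simp [h]), hperiod, Complex.exp_int_mul_two_pi_mul_I]
    simp

lemma integral_exp_mul_sin_pow (p q : ℕ) :
    ∫ t in Set.Ioo 0 π, Complex.exp ((p - q) * (t * Complex.I)) * (Real.sin t : ℂ) ^ (p + q) =
      π * ((2 * Complex.I) ^ (p + q))⁻¹ * (-1) ^ p * (p + q).choose p := by
  have hexpand (t : ℝ) :
      Complex.exp ((p - q) * (t * Complex.I)) * (Real.sin t : ℂ) ^ (p + q) =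
        ∑ k ∈ Finset.range (p + q + 1), ((2 * Complex.I) ^ (p + q))⁻¹ * (-1) ^ k *
          (p + q).choose k * Complex.exp (2 * ((p : ℤ) - k : ℤ) * Complex.I * t) := by
    rw [Complex.ofReal_sin, sin_pow_eq_sum_exp, Finset.mul_sum, Finset.mul_sum]
    refine Finset.sum_congr rfl fun k _ ↦ ?_
    have hadd : 2 * (((p : ℤ) - k : ℤ) : ℂ) * Complex.I * t =
        (p - q) * (t * Complex.I) + (((p + q : ℕ) : ℂ) - 2 * k) * (t * Complex.I) := by
      push_cast
      ring
    rw [hadd, Complex.exp_add]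
    ring
  rw [← integral_Ioc_eq_integral_Ioo, ← intervalIntegral.integral_of_le Real.pi_pos.le]
  simp only [hexpand]
  rw [intervalIntegral.integral_finsetSum fun k _ ↦
    Continuous.intervalIntegrable (by fun_prop) _ _]
  simp only [intervalIntegral.integral_const_mul, integral_exp_two_mul_int, sub_eq_zero,
    Nat.cast_inj, mul_ite, mul_zero]
  rw [Finset.sum_ite_eq, if_pos (Finset.mem_range_succ_iff.mpr (Nat.le_add_right p q))]
  ring

end AngularIntegral

section PeterssonPairing

variable {p q : ℕ}

lemma inv_sin_sq_smul_petersson_invPow (f : ℍ → ℂ) {u : ℂ} (hu : u ∈ logStrip) :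
    (Real.sin u.im ^ 2)⁻¹ •
        petersson (p + q + 2 : ℤ) (invPow p) f (ofComplex (Complex.exp u)) =
      Complex.exp ((p - q) * (u.im * Complex.I)) * (Real.sin u.im : ℂ) ^ (p + q) *
        expPullback q f u := by
  have hsin : (Real.sin u.im : ℂ) ≠ 0 := by exact_mod_cast (Real.sin_pos_of_mem_Ioo hu).ne'
  have hexp : Complex.exp u = Complex.exp u.re * Complex.exp (u.im * Complex.I) := by
    rw [← Complex.exp_add, Complex.re_add_im]
  have hconj : conj (Complex.exp u) = Complex.exp u.re * (Complex.exp (u.im * Complex.I))⁻¹ := by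
    rw [← Complex.exp_conj, ← Complex.exp_neg, ← Complex.exp_add]
    congr 1
    apply Complex.ext <;> simp
  have hang : Complex.exp ((p - q) * (u.im * Complex.I)) =
      Complex.exp (u.im * Complex.I) ^ p * (Complex.exp (u.im * Complex.I) ^ q)⁻¹ := by
    rw [sub_mul, Complex.exp_sub, Complex.exp_nat_mul, Complex.exp_nat_mul, div_eq_mul_inv]
  have hcoe : (ofComplex (Complex.exp u) : ℂ) = Complex.exp u := by
    rw [ofComplex_apply_of_im_pos (exp_im_pos hu)]
  have him : ((ofComplex (Complex.exp u)).im : ℂ) = Complex.exp u.re * Real.sin u.im := by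
    rw [← coe_im, hcoe]
    exact_mod_cast Complex.exp_im u
  rw [petersson, invPow, him, hcoe, expPullback, hang, map_inv₀, map_pow, Complex.real_smul, hconj,
    show (p + q + 2 : ℤ) = ((p + q + 2 : ℕ) : ℤ) by push_cast; ring, zpow_natCast, hexp]
  simp only [Complex.ofReal_inv, Complex.ofReal_pow, mul_pow, mul_inv, inv_pow, inv_inv]
  field_simp
  ring

variable {Γ : Subgroup (GL (Fin 2) ℝ)} [Γ.IsArithmetic]

lemma integrableOn_exp_mul_sin_pow_mul_expPullback (f : CuspForm Γ (p + q + 2 : ℤ))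
    (hp : 1 ≤ p) (hq : 1 ≤ q) :
    IntegrableOn (fun u ↦ Complex.exp ((p - q) * (u.im * Complex.I)) *
      (Real.sin u.im : ℂ) ^ (p + q) * expPullback q f u) logStrip := by
  obtain ⟨C, -, hle⟩ := exists_norm_expPullback_le f hp hq
  have hsin : IntegrableOn (fun t ↦ Real.sin t ^ (-(1 / 2) : ℝ)) (Set.Ioo 0 π) :=
    (intervalIntegrable_iff_integrableOn_Ioo_of_le Real.pi_pos.le).mp
      (intervalIntegrable_sin_rpow (by norm_num))
  have hbound : IntegrableOn
      (fun u : ℂ ↦ C * (Real.exp (-|u.re| / 2) * Real.sin u.im ^ (-(1 / 2) : ℝ))) logStrip := by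
    refine integrableOn_logStrip_iff.mpr ?_
    simpa using (integrable_exp_neg_abs_div_two.mul_prod hsin).const_mul C
  refine hbound.mono' ?_ ((ae_restrict_iff' measurableSet_logStrip).mpr (.of_forall fun u hu ↦ ?_))
  · refine ContinuousOn.aestronglyMeasurable (.mul (by fun_prop) ?_) measurableSet_logStrip
    exact (differentiableOn_expPullback q f.holo').continuousOn
  have hpos := Real.sin_pos_of_mem_Ioo hu
  have hunit : ‖Complex.exp ((p - q) * (u.im * Complex.I))‖ = 1 := by
    rw [← mul_assoc]
    exact_mod_cast Complex.norm_exp_ofReal_mul_I ((p - q) * u.im)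
  rw [norm_mul, norm_mul, hunit, one_mul, norm_pow, Complex.norm_real, Real.norm_of_nonneg hpos.le]
  calc Real.sin u.im ^ (p + q) * ‖expPullback q f u‖
      ≤ Real.sin u.im ^ (p + q) *
          (C * Real.exp (-|u.re| / 2) * Real.sin u.im ^ (-(p + q + 1 / 2 : ℝ))) := by
        gcongr
        exact hle u hu
    _ = C * (Real.exp (-|u.re| / 2) *
          Real.sin u.im ^ (((p + q : ℕ) : ℝ) + -(p + q + 1 / 2 : ℝ))) := by
        rw [Real.rpow_add hpos, Real.rpow_natCast]
        ring
    _ = C * (Real.exp (-|u.re| / 2) * Real.sin u.im ^ (-(1 / 2) : ℝ)) := by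
        push_cast
        ring_nf

lemma integrable_petersson_invPow (f : CuspForm Γ (p + q + 2 : ℤ)) (hp : 1 ≤ p) (hq : 1 ≤ q) :
    Integrable (petersson (p + q + 2 : ℤ) (invPow p) f) :=
  integrable_iff_integrableOn_logStrip.mpr
    ((integrableOn_exp_mul_sin_pow_mul_expPullback f hp hq).congr_fun
      (fun _ hu ↦ (inv_sin_sq_smul_petersson_invPow f hu).symm) measurableSet_logStrip)

lemma integral_petersson_invPow (f : CuspForm Γ (p + q + 2 : ℤ)) (hp : 1 ≤ p) (hq : 1 ≤ q) :
    ∫ τ, petersson (p + q + 2 : ℤ) (invPow p) f τ =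
      π * ((2 * Complex.I) ^ (p + q))⁻¹ * (-1) ^ p * (p + q).choose p * periodInt q f := by
  rw [integral_eq_setIntegral_logStrip, setIntegral_congr_fun measurableSet_logStrip
      fun u hu ↦ inv_sin_sq_smul_petersson_invPow f hu,
    setIntegral_logStrip (integrableOn_exp_mul_sin_pow_mul_expPullback f hp hq),
    ← integral_exp_mul_sin_pow, ← integral_mul_const]
  refine setIntegral_congr_fun measurableSet_Ioo fun t ht ↦ ?_
  have him (s : ℝ) : ((s : ℂ) + t * Complex.I).im = t := by simp
  simp only [him, integral_const_mul, integral_expPullback_eq_periodInt f hp hq ht]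

end PeterssonPairing

section GammaZero

variable {N : ℕ} {F : Set ℂ}

/-- `Γ₀(N)` as the set of its matrix entries. -/
def gamma0EquivEntries (N : ℕ) : CongruenceSubgroup.Gamma0 N ≃ {p : ℤ × ℤ × ℤ × ℤ //
    p.1 * p.2.2.2 - p.2.1 * p.2.2.1 = 1 ∧ (N : ℤ) ∣ p.2.2.1} where
  toFun γ := ⟨((γ : SL(2, ℤ)) 0 0, (γ : SL(2, ℤ)) 0 1, (γ : SL(2, ℤ)) 1 0, (γ : SL(2, ℤ)) 1 1),
    entries_mul_sub_mul_eq_one (γ : SL(2, ℤ)),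
    (ZMod.intCast_zmod_eq_zero_iff_dvd _ N).mp (CongruenceSubgroup.Gamma0_mem.mp γ.2)⟩
  invFun p := ⟨⟨!![p.1.1, p.1.2.1; p.1.2.2.1, p.1.2.2.2], by
      rw [Matrix.det_fin_two_of, p.2.1]⟩,
    CongruenceSubgroup.Gamma0_mem.mpr ((ZMod.intCast_zmod_eq_zero_iff_dvd _ N).mpr p.2.2)⟩
  left_inv γ := by
    ext i j
    fin_cases i <;> fin_cases j <;> rfl
  right_inv _ := rfl

lemma Rq_eq_cconst_inv_mul_poincareSeries (N p q : ℕ) (τ : ℍ) :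
    Rq N (p + q) q τ = (cconst (p + q) q)⁻¹ *
      poincareSeries (CongruenceSubgroup.Gamma0 N) (p + q + 2 : ℤ) (invPow p) τ := by
  rw [Rq, poincareSeries, ← (gamma0EquivEntries N).tsum_eq, Nat.add_sub_cancel]
  exact congrArg _ (tsum_congr fun γ ↦ (invPow_slash_apply p q γ τ).symm)

lemma cconst_eq (w n : ℕ) :
    cconst w n = 2 * (π * ((2 * Complex.I) ^ w)⁻¹ * (-1) ^ n * w.choose n) := by
  have h2 : (2 * Complex.I : ℂ) ≠ 0 := by simp
  rw [cconst, zpow_sub₀ h2, zpow_neg, zpow_natCast, zpow_one]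
  field_simp
  ring

lemma cconst_ne_zero {w n : ℕ} (hn : n ≤ w) : cconst w n ≠ 0 := by
  simp [cconst_eq, Real.pi_ne_zero, Nat.choose_ne_zero hn]

lemma conj_cconst {w : ℕ} (hw : Even w) (n : ℕ) : conj (cconst w n) = cconst w n := by
  simp [cconst_eq, hw.neg_pow, map_ofNat (starRingEnd ℂ)]

lemma two_mul_integral_petersson_invPow {p q : ℕ} {Γ : Subgroup (GL (Fin 2) ℝ)} [Γ.IsArithmetic]
    (f : CuspForm Γ (p + q + 2 : ℤ)) (hp : 1 ≤ p) (hq : 1 ≤ q) (hpq : Even (p + q)) :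
    2 * ∫ τ, petersson (p + q + 2 : ℤ) (invPow p) f τ = cconst (p + q) q * periodInt q f := by
  rw [integral_petersson_invPow f hp hq, cconst_eq, neg_one_pow_congr (Nat.even_add.mp hpq),
    Nat.choose_symm_add]
  ring

lemma pet_eq_setIntegral_petersson (w : ℕ) (hF : MeasurableSet F) (hpos : F ⊆ {z | 0 < z.im})
    (f g : ℍ → ℂ) :
    pet w F f g = ∫ τ in ((↑) : ℍ → ℂ) ⁻¹' F, petersson (w + 2 : ℤ) g f τ := by
  rw [setIntegral_preimage_coe _ hF hpos]
  refine setIntegral_congr_fun hF fun z hz ↦ ?_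
  have hz' : (z.im : ℂ) ≠ 0 := by exact_mod_cast (hpos hz).ne'
  have him : (ofComplex z).im = z.im := by rw [ofComplex_apply_of_im_pos (hpos hz), mk_im]
  simp only [toC_eq_ofComplex _ (hpos hz), petersson, him, Complex.real_smul]
  rw [zpow_add₀ hz', zpow_natCast, zpow_ofNat]
  push_cast
  field_simp

lemma IsFundDom.smul_eq_self (hF : IsFundDom N F) (γ : CongruenceSubgroup.Gamma0 N) {τ : ℍ}
    (hτ : (τ : ℂ) ∈ F) (h : ((γ • τ : ℍ) : ℂ) ∈ F) : γ • τ = τ := by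
  have hγ := (gamma0EquivEntries N γ).2
  have hcoe := coe_smul_eq_div (γ : SL(2, ℤ)) τ
  exact UpperHalfPlane.ext (hcoe.trans (hF.2.2.2 τ hτ _ _ _ _ hγ.1 hγ.2 (hcoe ▸ h)))

lemma IsFundDom.isFundamentalSet (hF : IsFundDom N F) :
    IsFundamentalSet (CongruenceSubgroup.Gamma0 N) (((↑) : ℍ → ℂ) ⁻¹' F) := by
  intro τ
  obtain ⟨a, b, c, d, hdet, hc, h⟩ := hF.2.2.1 τ τ.im_pos
  let γ := (gamma0EquivEntries N).symm ⟨(a, b, c, d), hdet, hc⟩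
  have hγ : ((γ • τ : ℍ) : ℂ) ∈ F := (coe_smul_eq_div (γ : SL(2, ℤ)) τ).symm ▸ h
  refine ⟨γ • τ, ⟨MulAction.mem_orbit _ _, hγ⟩, ?_⟩
  rintro _ ⟨⟨δ, rfl⟩, hδ⟩
  have hδγ : (δ * γ⁻¹) • γ • τ = δ • τ := by rw [smul_smul, inv_mul_cancel_right]
  exact hδγ.symm.trans (hF.smul_eq_self (δ * γ⁻¹) hγ (by rwa [hδγ]))

lemma petersson_smul_left (k : ℤ) (c : ℂ) (f g : ℍ → ℂ) (τ : ℍ) :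
    petersson k (c • f) g τ = conj c * petersson k f g τ := by
  simp only [petersson, Pi.smul_apply, smul_eq_mul, map_mul]
  ring

lemma periodInt_eq_pet_smul_poincareSeries_invPow [NeZero N] {p q : ℕ} (hp : 1 ≤ p) (hq : 1 ≤ q)
    (hpq : Even (p + q)) (hF : IsFundDom N F)
    (f : CuspForm (CongruenceSubgroup.Gamma0 N) (p + q + 2 : ℤ)) :
    periodInt q f = pet (p + q) F f ((cconst (p + q) q)⁻¹ •
      poincareSeries (CongruenceSubgroup.Gamma0 N) (p + q + 2 : ℤ) (invPow p)) := by
  have hneg : (-1 : SL(2, ℤ)) ∈ CongruenceSubgroup.Gamma0 N := by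
    simp [CongruenceSubgroup.Gamma0_mem]
  have hslash (γ : SL(2, ℤ)) (hγ : γ ∈ CongruenceSubgroup.Gamma0 N) :
      (f : ℍ → ℂ) ∣[(p + q + 2 : ℤ)] γ = f :=
    SlashInvariantForm.slash_action_eqn f _ (Subgroup.mem_map_of_mem _ hγ)
  have hunfold := hF.isFundamentalSet.setIntegral_petersson_poincareSeries hneg
    (UpperHalfPlane.measurable_coe hF.1) hslash (integrable_petersson_invPow f hp hq)
  rw [two_mul_integral_petersson_invPow f hp hq hpq] at hunfold
  rw [pet_eq_setIntegral_petersson _ hF.1 hF.2.1, Nat.cast_add]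
  simp only [petersson_smul_left, map_inv₀, conj_cconst hpq, integral_const_mul, hunfold,
    inv_mul_cancel_left₀ (cconst_ne_zero (Nat.le_add_left q p))]

end GammaZero

end CuspFormPeriods

/-- the series `R_n` is a cusp form of weight `w+2` on `Γ₀(N)` and
represents the period functional: `r_n(f) = ⟨f, R_n⟩` for every cusp form `f` of weight
`w+2` on `Γ₀(N)` and every measurable fundamental domain. -/
theorem Rn_is_cuspform_and_represents_period (N : ℕ) (hN : 1 ≤ N) (w : ℕ) (hw : 2 ≤ w)
    (hwe : Even w) (n : ℕ) (hn0 : 0 < n) (hnw : n < w) :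
    ∃ R : CuspForm (CongruenceSubgroup.Gamma0 N) (w + 2),
      (∀ z : UpperHalfPlane, R z = Rq N w n (z : ℂ)) ∧
      ∀ F : Set ℂ, IsFundDom N F →
        ∀ f : CuspForm (CongruenceSubgroup.Gamma0 N) (w + 2),
          periodInt n f = pet w F f R := by
  have : NeZero N := ⟨by omega⟩
  obtain ⟨p, rfl⟩ := Nat.exists_eq_add_of_le' hnw.le
  have hp : 1 ≤ p := by omega
  rw [Nat.cast_add]
  exact ⟨(cconst (p + n) n)⁻¹ • invPowCuspForm (CongruenceSubgroup.Gamma0 N) hp hn0,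
    fun z ↦ (Rq_eq_cconst_inv_mul_poincareSeries N p n z).symm,
    fun _ hF f ↦ periodInt_eq_pet_smul_poincareSeries_invPow hp hn0 hwe hF f⟩

end
end

section
/- Let w ≥ 2 be even, let n be an integer with 0 < n < w, set ñ = w − n, let D > 1 and let h be an integer with D ∤ h. Define S_{1,h}(z) = 2·(−1)^{n+1}·Σ_{d ∈ ℤ} 1/(z + h/D + d)^{n+1} for z in the upper half-plane, and F_{1,h}(X) = ∫₀^{i∞} S_{1,h}(z)(X−z)^w dz + (−1)^{n−1}·∫₀^{i∞} S_{1,−h}(z)(X+z)^w dz. Then for every complex number X: F_{1,h}(X) = c_n·(−1)^n·(2i)^{w+1}·B_{ñ+1}({h/D} + X)/(ñ+1), where c_n = (−1)^n·4πi·(2i)^{−w−1}·C(w,n). -/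
open MeasureTheory Complex Real

noncomputable section

/-- The contour integral `∫₀^{i∞} F(z) dz` along the positive imaginary axis `z = iy`. -/
def intI (F : ℂ → ℂ) : ℂ := Complex.I * ∫ y in Set.Ioi (0 : ℝ), F (Complex.I * y)

/-- The `k`-th Bernoulli polynomial evaluated at a complex number. -/
def bpoly (k : ℕ) (x : ℂ) : ℂ := Polynomial.aeval x (Polynomial.bernoulli k)

/-- `S_{1,h}(z) = 2(−1)^{n+1} Σ_{d ∈ ℤ} 1/(z + h/D + d)^{n+1}`. -/
def S1 (D : ℕ) (n : ℕ) (h : ℤ) (z : ℂ) : ℂ :=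
  2 * (-1) ^ (n + 1) * ∑' d : ℤ, 1 / (z + (h : ℂ) / D + d) ^ (n + 1)

/-! Write `ε_k(u) = ∑ 1 / (u + d) ^ k`. Parity and periodicity of `ε_{n+1}` turn the two half-line
integrals into one integral of `ε_{n+1}(u) (s - u) ^ w`, with `s = {h/D} + X`, along the whole
vertical line `Re u = {h/D}`. By the difference equation of the Bernoulli polynomials,
`(s - u) ^ w = P(u) - P(u - 1)` for the polynomial `P(u) = -B_{w+1}(s - u) / (w + 1)`. Since
`ε_{n+1}` is `1`-periodic, the integral is therefore that of `ε_{n+1} P` over the line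
`Re u = {h/D}` minus the one over `Re u = {h/D} - 1`. As `ε_{n+1}` decays exponentially in
`|Im u|`, this difference is `2πi` times the residue of `ε_{n+1} P` at its only pole `u = 0`
between the lines, namely the `n`-th coefficient of `P`, which is a derivative of `B_{w+1}` at `s`,
hence a multiple of `B_{w-n+1}(s)`. -/

section RectangleIntegral

/-- The boundary of the rectangle with vertical sides `Re u = a`, `Re u = b` and horizontal sides
`Im u = c`, `Im u = d`. -/
def rectBoundary (a b c d : ℝ) : Set ℂ :=
  (Set.uIcc a b ×ℂ {c, d}) ∪ ({a, b} ×ℂ Set.uIcc c d)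

/-- The contour integral of `f` along `rectBoundary a b c d`, counterclockwise when `a ≤ b` and
`c ≤ d`; the four terms are those of
`Complex.integral_boundary_rect_eq_zero_of_differentiableOn`. -/
def rectIntegral (f : ℂ → ℂ) (a b c d : ℝ) : ℂ :=
  (∫ x : ℝ in a..b, f (x + c * I)) - (∫ x : ℝ in a..b, f (x + d * I)) +
    I * (∫ y : ℝ in c..d, f (b + y * I)) - I * (∫ y : ℝ in c..d, f (a + y * I))

variable {a b c d : ℝ} {f g F : ℂ → ℂ}

lemma horizontal_mem_rectBoundary {x y : ℝ} (hx : x ∈ Set.uIcc a b) (hy : y = c ∨ y = d) :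
    (x + y * I : ℂ) ∈ rectBoundary a b c d :=
  Or.inl (by simpa [mem_reProdIm] using ⟨hx, hy⟩)

lemma vertical_mem_rectBoundary {x y : ℝ} (hx : x = a ∨ x = b) (hy : y ∈ Set.uIcc c d) :
    (x + y * I : ℂ) ∈ rectBoundary a b c d :=
  Or.inr (by simpa [mem_reProdIm] using ⟨hx, hy⟩)

lemma ne_zero_of_mem_rectBoundary (ha : a ≠ 0) (hb : b ≠ 0) (hc : c ≠ 0) (hd : d ≠ 0) {u : ℂ}
    (hu : u ∈ rectBoundary a b c d) : u ≠ 0 := by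
  rintro rfl
  simp [rectBoundary, mem_reProdIm, ha.symm, hb.symm, hc.symm, hd.symm] at hu

lemma re_mem_uIcc_of_mem_rectBoundary {u : ℂ} (hu : u ∈ rectBoundary a b c d) :
    u.re ∈ Set.uIcc a b := by
  rcases hu with ⟨hre, -⟩ | ⟨rfl | rfl, -⟩
  exacts [hre, Set.left_mem_uIcc, Set.right_mem_uIcc]

lemma intervalIntegrable_horizontal (hf : ContinuousOn f (rectBoundary a b c d)) {y : ℝ}
    (hy : y = c ∨ y = d) : IntervalIntegrable (fun x : ℝ => f (x + y * I)) volume a b :=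
  (hf.comp (by fun_prop) fun _ hx => horizontal_mem_rectBoundary hx hy).intervalIntegrable

lemma intervalIntegrable_vertical (hf : ContinuousOn f (rectBoundary a b c d)) {x : ℝ}
    (hx : x = a ∨ x = b) : IntervalIntegrable (fun y : ℝ => f (x + y * I)) volume c d :=
  (hf.comp (by fun_prop) fun _ hy => vertical_mem_rectBoundary hx hy).intervalIntegrable

lemma rectIntegral_congr (hfg : Set.EqOn f g (rectBoundary a b c d)) :
    rectIntegral f a b c d = rectIntegral g a b c d := by
  have horizontal {y : ℝ} (hy : y = c ∨ y = d) :
      ∫ x : ℝ in a..b, f (x + y * I) = ∫ x : ℝ in a..b, g (x + y * I) :=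
    intervalIntegral.integral_congr fun _ hx => hfg (horizontal_mem_rectBoundary hx hy)
  have vertical {x : ℝ} (hx : x = a ∨ x = b) :
      ∫ y : ℝ in c..d, f (x + y * I) = ∫ y : ℝ in c..d, g (x + y * I) :=
    intervalIntegral.integral_congr fun _ hy => hfg (vertical_mem_rectBoundary hx hy)
  simp only [rectIntegral, horizontal (.inl rfl), horizontal (.inr rfl), vertical (.inl rfl),
    vertical (.inr rfl)]

lemma rectIntegral_add (hf : ContinuousOn f (rectBoundary a b c d))
    (hg : ContinuousOn g (rectBoundary a b c d)) :
    rectIntegral (fun u => f u + g u) a b c d =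
      rectIntegral f a b c d + rectIntegral g a b c d := by
  have horizontal {y : ℝ} (hy : y = c ∨ y = d) :=
    intervalIntegral.integral_add (intervalIntegrable_horizontal hf hy)
      (intervalIntegrable_horizontal hg hy)
  have vertical {x : ℝ} (hx : x = a ∨ x = b) :=
    intervalIntegral.integral_add (intervalIntegrable_vertical hf hx)
      (intervalIntegrable_vertical hg hx)
  simp only [rectIntegral, horizontal (.inl rfl), horizontal (.inr rfl), vertical (.inl rfl),
    vertical (.inr rfl)]
  ring

lemma rectIntegral_const_mul (k : ℂ) (f : ℂ → ℂ) :
    rectIntegral (fun u => k * f u) a b c d = k * rectIntegral f a b c d := by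
  simp only [rectIntegral, intervalIntegral.integral_const_mul]
  ring

lemma integral_horizontal_eq_sub {y : ℝ}
    (hF : ∀ x ∈ Set.uIcc a b, HasDerivAt F (f (x + y * I)) (x + y * I))
    (hf : IntervalIntegrable (fun x : ℝ => f (x + y * I)) volume a b) :
    ∫ x : ℝ in a..b, f (x + y * I) = F (b + y * I) - F (a + y * I) := by
  refine intervalIntegral.integral_eq_sub_of_hasDerivAt (f := fun x : ℝ => F (x + y * I))
    (fun x hx => ?_) hf
  have hline : HasDerivAt (fun x : ℝ => (x + y * I : ℂ)) 1 x := ofRealCLM.hasDerivAt.add_const _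
  simpa [Function.comp_def] using (hF x hx).comp x hline

lemma I_mul_integral_vertical_eq_sub {x : ℝ}
    (hF : ∀ y ∈ Set.uIcc c d, HasDerivAt F (f (x + y * I)) (x + y * I))
    (hf : IntervalIntegrable (fun y : ℝ => f (x + y * I)) volume c d) :
    I * ∫ y : ℝ in c..d, f (x + y * I) = F (x + d * I) - F (x + c * I) := by
  rw [← intervalIntegral.integral_const_mul]
  refine intervalIntegral.integral_eq_sub_of_hasDerivAt (f := fun y : ℝ => F (x + y * I))
    (fun y hy => ?_) (hf.const_mul I)
  have hline : HasDerivAt (fun y : ℝ => (x + y * I : ℂ)) I y := by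
    simpa using (ofRealCLM.hasDerivAt.mul_const I).const_add (x : ℂ)
  simpa [Function.comp_def, mul_comm] using (hF y hy).comp y hline

lemma rectIntegral_eq_zero_of_hasDerivAt (hf : ContinuousOn f (rectBoundary a b c d))
    (hF : ∀ u ∈ rectBoundary a b c d, HasDerivAt F (f u) u) : rectIntegral f a b c d = 0 := by
  have horizontal {y : ℝ} (hy : y = c ∨ y = d) := integral_horizontal_eq_sub
    (fun _ hx => hF _ (horizontal_mem_rectBoundary hx hy)) (intervalIntegrable_horizontal hf hy)
  have vertical {x : ℝ} (hx : x = a ∨ x = b) := I_mul_integral_vertical_eq_sub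
    (fun _ hy => hF _ (vertical_mem_rectBoundary hx hy)) (intervalIntegrable_vertical hf hx)
  rw [rectIntegral, horizontal (.inl rfl), horizontal (.inr rfl), vertical (.inl rfl),
    vertical (.inr rfl)]
  ring

lemma rectIntegral_eq_zero_of_differentiableOn
    (hf : DifferentiableOn ℂ f (Set.uIcc a b ×ℂ Set.uIcc c d)) : rectIntegral f a b c d = 0 :=
  integral_boundary_rect_eq_zero_of_differentiableOn f ⟨a, c⟩ ⟨b, d⟩ hf

lemma log_neg_of_im_pos {z : ℂ} (hz : 0 < z.im) : Complex.log (-z) = Complex.log z - π * I := by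
  simp only [Complex.log, norm_neg, arg_neg_eq_arg_sub_pi_of_im_pos hz]
  push_cast
  ring

lemma log_neg_of_im_neg {z : ℂ} (hz : z.im < 0) : Complex.log (-z) = Complex.log z + π * I := by
  simp only [Complex.log, norm_neg, arg_neg_eq_arg_add_pi_of_im_neg hz]
  push_cast
  ring

lemma hasDerivAt_log_neg {z : ℂ} (hz : z.re < 0) :
    HasDerivAt (fun u => Complex.log (-u)) z⁻¹ z := by
  have := (hasDerivAt_neg z).clog (.inl (by simpa using hz))
  rwa [neg_div_neg_eq, one_div] at this

lemma rectIntegral_inv (ha : a < 0) (hb : 0 < b) (hc : c < 0) (hd : 0 < d) :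
    rectIntegral (fun u => u⁻¹) a b c d = 2 * π * I := by
  have hcont : ContinuousOn (fun u : ℂ => u⁻¹) (rectBoundary a b c d) :=
    continuousOn_inv₀.mono fun _ => ne_zero_of_mem_rectBoundary ha.ne hb.ne' hc.ne hd.ne'
  have horizontal {y : ℝ} (hy : y = c ∨ y = d) (hy0 : y ≠ 0) :=
    integral_horizontal_eq_sub (F := Complex.log)
      (fun _ _ => hasDerivAt_log (.inr (by simpa using hy0)))
      (intervalIntegrable_horizontal hcont hy)
  have right := I_mul_integral_vertical_eq_sub (F := Complex.log)
    (fun _ _ => hasDerivAt_log (.inl (by simpa using hb)))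
    (intervalIntegrable_vertical hcont (.inr rfl))
  -- The left side crosses the cut of `log`, so it needs the branch `log (-u)`.
  have left := I_mul_integral_vertical_eq_sub (F := fun u => Complex.log (-u))
    (fun _ _ => hasDerivAt_log_neg (by simpa using ha))
    (intervalIntegrable_vertical hcont (.inl rfl))
  rw [rectIntegral, horizontal (.inl rfl) hc.ne, horizontal (.inr rfl) hd.ne', right, left,
    log_neg_of_im_pos (by simpa using hd), log_neg_of_im_neg (by simpa using hc)]
  ring

lemma rectIntegral_zpow_of_ne (ha : a ≠ 0) (hb : b ≠ 0) (hc : c ≠ 0) (hd : d ≠ 0) {m : ℤ}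
    (hm : m ≠ -1) : rectIntegral (fun u => u ^ m) a b c d = 0 := by
  have hne {u : ℂ} (hu : u ∈ rectBoundary a b c d) : u ≠ 0 :=
    ne_zero_of_mem_rectBoundary ha hb hc hd hu
  have hm' : (m + 1 : ℂ) ≠ 0 := by exact_mod_cast mt eq_neg_of_add_eq_zero_left hm
  refine rectIntegral_eq_zero_of_hasDerivAt (F := fun u => u ^ (m + 1) / (m + 1))
    (continuousOn_id.zpow₀ m fun _ hu => .inl (hne hu)) fun u hu => ?_
  refine ((hasDerivAt_zpow (m + 1) u (.inl (hne hu))).div_const _).congr_deriv ?_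
  rw [add_sub_cancel_right]
  push_cast
  field_simp

lemma rectIntegral_eval_div_pow (ha : a < 0) (hb : 0 < b) (hc : c < 0) (hd : 0 < d)
    (P : Polynomial ℂ) (n : ℕ) :
    rectIntegral (fun u => P.eval u / u ^ (n + 1)) a b c d = 2 * π * I * P.coeff n := by
  have hne {u : ℂ} (hu : u ∈ rectBoundary a b c d) : u ≠ 0 :=
    ne_zero_of_mem_rectBoundary ha.ne hb.ne' hc.ne hd.ne' hu
  have hcont (P : Polynomial ℂ) :
      ContinuousOn (fun u => P.eval u / u ^ (n + 1)) (rectBoundary a b c d) :=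
    P.continuousOn.div (by fun_prop) fun _ hu => pow_ne_zero _ (hne hu)
  induction P using Polynomial.induction_on' with
  | add p q hp hq =>
    simp only [Polynomial.eval_add, add_div, Polynomial.coeff_add, mul_add]
    rw [rectIntegral_add (hcont p) (hcont q), hp, hq]
  | monomial k r =>
    have hzpow : Set.EqOn (fun u => (Polynomial.monomial k r).eval u / u ^ (n + 1))
        (fun u => r * u ^ (k - (n + 1 : ℕ) : ℤ)) (rectBoundary a b c d) := fun u hu => by
      simp only [Polynomial.eval_monomial, zpow_sub₀ (hne hu), zpow_natCast, mul_div_assoc]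
    rw [rectIntegral_congr hzpow, rectIntegral_const_mul]
    obtain rfl | hk := eq_or_ne k n
    · simp [rectIntegral_inv ha hb hc hd, mul_comm]
    · rw [rectIntegral_zpow_of_ne ha.ne hb.ne' hc.ne hd.ne' (by omega),
        Polynomial.coeff_monomial_of_ne _ hk.symm, mul_zero, mul_zero]

end RectangleIntegral

section VerticalLines

open Filter Topology

lemma integrable_exp_neg_abs : Integrable fun y : ℝ => Real.exp (-|y|) := by
  rw [← integrableOn_univ, ← Set.Iic_union_Ioi (a := (0 : ℝ)), integrableOn_union]
  constructor
  · exact (integrableOn_exp_Iic 0).congr_fun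
      (fun y hy => by rw [abs_of_nonpos hy, neg_neg]) measurableSet_Iic
  · exact (integrableOn_exp_neg_Ioi 0).congr_fun
      (fun y hy => by rw [abs_of_pos hy]) measurableSet_Ioi

lemma eventually_cocompact_one_le_abs : ∀ᶠ y : ℝ in cocompact ℝ, 1 ≤ |y| :=
  tendsto_norm_cocompact_atTop.eventually_ge_atTop 1

lemma integrable_of_norm_le_exp_neg_abs {E : Type*} [NormedAddCommGroup E] {g : ℝ → E} {C : ℝ}
    (hg : Continuous g) (hC : ∀ y, 1 ≤ |y| → ‖g y‖ ≤ C * Real.exp (-|y|)) : Integrable g := by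
  refine hg.locallyIntegrable.integrable_of_isBigO_cocompact (.of_bound C ?_)
    (integrable_exp_neg_abs.integrableAtFilter _)
  filter_upwards [eventually_cocompact_one_le_abs] with y hy
  simpa using hC y hy

variable {a b : ℝ}

lemma tendsto_integral_horizontal_cocompact {E : Type*} [NormedAddCommGroup E] [NormedSpace ℝ E]
    {f : ℂ → E} {C : ℝ}
    (hf : ∀ u : ℂ, u.re ∈ Set.uIcc a b → 1 ≤ |u.im| → ‖f u‖ ≤ C * Real.exp (-|u.im|)) :
    Tendsto (fun y : ℝ => ∫ x : ℝ in a..b, f (x + y * I)) (cocompact ℝ) (𝓝 0) := by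
  refine squeeze_zero_norm' (a := fun y => C * Real.exp (-|y|) * |b - a|) ?_ ?_
  · filter_upwards [eventually_cocompact_one_le_abs] with y hy
    refine intervalIntegral.norm_integral_le_of_norm_le_const fun x hx => ?_
    simpa using hf (x + y * I) (by simpa using Set.uIoc_subset_uIcc hx) (by simpa using hy)
  · have hexp : Tendsto (fun y : ℝ => Real.exp (-|y|)) (cocompact ℝ) (𝓝 0) :=
      Real.tendsto_exp_neg_atTop_nhds_zero.comp tendsto_norm_cocompact_atTop
    simpa using (hexp.const_mul C).mul_const |b - a|

lemma integral_vertical_sub_integral_vertical {f : ℂ → ℂ} {J : ℂ}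
    (ha : Integrable fun y : ℝ => f (a + y * I)) (hb : Integrable fun y : ℝ => f (b + y * I))
    (hf : Tendsto (fun y : ℝ => ∫ x : ℝ in a..b, f (x + y * I)) (cocompact ℝ) (𝓝 0))
    (hJ : ∀ R : ℝ, 0 < R → rectIntegral f a b (-R) R = J) :
    I * (∫ y : ℝ, f (b + y * I)) - I * (∫ y : ℝ, f (a + y * I)) = J := by
  have vertical {x : ℝ} (hx : Integrable fun y : ℝ => f (x + y * I)) :=
    (intervalIntegral_tendsto_integral hx tendsto_neg_atTop_atBot tendsto_id).const_mul I
  have hbot := hf.comp (tendsto_neg_atTop_atBot.mono_right atBot_le_cocompact)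
  have htop := hf.mono_left atTop_le_cocompact
  have hlim := ((hbot.sub htop).add (vertical hb)).sub (vertical ha)
  rw [sub_zero, zero_add] at hlim
  refine tendsto_nhds_unique (hlim.congr' ?_) tendsto_const_nhds
  filter_upwards [eventually_gt_atTop 0] with R hR using hJ R hR

end VerticalLines

section Bernoulli

lemma bpoly_one_add (k : ℕ) (x : ℂ) : bpoly k (1 + x) = bpoly k x + k * x ^ (k - 1) := by
  have := congrArg (Polynomial.aeval x) (Polynomial.bernoulli_comp_one_add_X k)
  simpa [bpoly, Polynomial.aeval_comp] using this

lemma hasseDeriv_bernoulli (k m : ℕ) :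
    Polynomial.hasseDeriv k (Polynomial.bernoulli m) =
      (m.choose k : ℚ) • Polynomial.bernoulli (m - k) := by
  ext i
  rw [Polynomial.hasseDeriv_coeff, Polynomial.coeff_smul, Polynomial.coeff_bernoulli,
    Polynomial.coeff_bernoulli, smul_eq_mul]
  obtain hik | hik := le_or_gt (i + k) m
  · have hchoose : (m.choose (i + k) : ℚ) * (i + k).choose k = m.choose k * (m - k).choose i := by
      have := Nat.choose_mul (n := m) (Nat.le_add_left k i)
      rw [Nat.add_sub_cancel] at this
      exact_mod_cast this
    rw [if_pos hik, if_pos (by omega), show m - k - i = m - (i + k) by omega]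
    linear_combination _root_.bernoulli (m - (i + k)) * hchoose
  · rw [if_neg (by omega), mul_zero]
    obtain hk | hk := lt_or_ge m k
    · rw [Nat.choose_eq_zero_of_lt hk, Nat.cast_zero, zero_mul]
    · rw [if_neg (by omega), mul_zero]

lemma hasseDeriv_map {R S : Type*} [Semiring R] [Semiring S] (f : R →+* S) (k : ℕ)
    (p : Polynomial R) :
    Polynomial.hasseDeriv k (p.map f) = (Polynomial.hasseDeriv k p).map f := by
  ext i
  simp [Polynomial.hasseDeriv_coeff]

lemma coeff_comp_C_sub_X {R : Type*} [CommRing R] (p : Polynomial R) (s : R) (n : ℕ) :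
    (p.comp (Polynomial.C s - Polynomial.X)).coeff n =
      (-1) ^ n * (Polynomial.hasseDeriv n p).eval s := by
  have htaylor : p.comp (Polynomial.C s - Polynomial.X) =
      (Polynomial.taylor s p).comp (Polynomial.C (-1) * Polynomial.X) := by
    rw [Polynomial.taylor_apply, Polynomial.comp_assoc]
    simp [sub_eq_neg_add]
  rw [htaylor, Polynomial.comp_C_mul_X_coeff, Polynomial.taylor_coeff, mul_comm]

/-- The polynomial `-B_{w+1}(s - u) / (w + 1)` in `u`. Its backward difference is `(s - u) ^ w`. -/
def bernoulliPrimitive (w : ℕ) (s : ℂ) : Polynomial ℂ :=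
  Polynomial.C (-(w + 1 : ℂ)⁻¹) *
    ((Polynomial.bernoulli (w + 1)).map (algebraMap ℚ ℂ)).comp (Polynomial.C s - Polynomial.X)

lemma eval_bernoulliPrimitive (w : ℕ) (s u : ℂ) :
    (bernoulliPrimitive w s).eval u = -(w + 1 : ℂ)⁻¹ * bpoly (w + 1) (s - u) := by
  simp [bernoulliPrimitive, bpoly, Polynomial.eval_map_algebraMap]

lemma eval_bernoulliPrimitive_sub_eval_sub_one (w : ℕ) (s u : ℂ) :
    (bernoulliPrimitive w s).eval u - (bernoulliPrimitive w s).eval (u - 1) = (s - u) ^ w := by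
  have hw : (w + 1 : ℂ) ≠ 0 := Nat.cast_add_one_ne_zero w
  rw [eval_bernoulliPrimitive, eval_bernoulliPrimitive, show s - (u - 1) = 1 + (s - u) by ring,
    bpoly_one_add, Nat.add_sub_cancel]
  push_cast
  field_simp
  ring

lemma choose_succ_div_succ {K : Type*} [Field K] [CharZero K] {w n : ℕ} (hn : n ≤ w) :
    ((w + 1).choose n : K) / (w + 1) = w.choose n / (w - n + 1) := by
  have hw : (w + 1 : K) ≠ 0 := Nat.cast_add_one_ne_zero w
  have hwn : (w - n + 1 : K) ≠ 0 := by exact_mod_cast Nat.cast_add_one_ne_zero (R := K) (w - n)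
  rw [div_eq_div_iff hw hwn]
  have := Nat.choose_mul_succ_eq w n
  rw [Nat.sub_add_comm hn] at this
  exact_mod_cast this.symm

lemma coeff_bernoulliPrimitive {w n : ℕ} (hn : n ≤ w) (s : ℂ) :
    (bernoulliPrimitive w s).coeff n =
      (-1) ^ (n + 1) * w.choose n * bpoly (w - n + 1) s / (w - n + 1) := by
  rw [bernoulliPrimitive, Polynomial.coeff_C_mul, coeff_comp_C_sub_X, hasseDeriv_map,
    hasseDeriv_bernoulli, Nat.sub_add_comm hn, Polynomial.eval_map_algebraMap, map_smul, ← bpoly,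
    Rat.smul_def, Rat.cast_natCast]
  linear_combination (-1) ^ (n + 1) * bpoly (w - n + 1) s * choose_succ_div_succ (K := ℂ) hn

end Bernoulli

section LatticeSum

/-- Eisenstein's trigonometric series `ε_k(u) = ∑ 1 / (u + d) ^ k` over `d ∈ ℤ`, absolutely
convergent for `k ≥ 2`. -/
def latticeSum (k : ℕ) (u : ℂ) : ℂ := ∑' d : ℤ, 1 / (u + d) ^ k

/-- The part of `latticeSum k` that is regular at `0`: the pole term `1 / u ^ k` is removed. -/
def latticeSumReg (k : ℕ) (u : ℂ) : ℂ := ∑' d : ({0}ᶜ : Set ℤ), 1 / (u + (d : ℤ)) ^ k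

lemma latticeSum_add_intCast (k : ℕ) (u : ℂ) (m : ℤ) :
    latticeSum k (u + m) = latticeSum k u := by
  rw [latticeSum, latticeSum, ← (Equiv.addLeft m).tsum_eq fun d : ℤ => 1 / (u + d) ^ k]
  simp [add_assoc]

lemma latticeSum_neg (k : ℕ) (u : ℂ) : latticeSum k (-u) = (-1) ^ k * latticeSum k u := by
  rw [latticeSum, latticeSum, ← (Equiv.neg ℤ).tsum_eq, ← tsum_mul_left]
  refine tsum_congr fun d => ?_
  rw [Equiv.neg_apply, Int.cast_neg, ← neg_add, neg_pow, one_div, mul_inv, ← inv_pow, inv_neg_one,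
    one_div]

variable {k : ℕ}

lemma summable_one_div_add_intCast_pow (hk : 1 < k) (u : ℂ) :
    Summable fun d : ℤ => 1 / (u + d) ^ k := by
  have := EisensteinSeries.linear_right_summable u 1 (k := k) (by exact_mod_cast hk)
  simpa using this

lemma latticeSum_eq_add_latticeSumReg (hk : 1 < k) (u : ℂ) :
    latticeSum k u = 1 / u ^ k + latticeSumReg k u := by
  have hsplit := (summable_one_div_add_intCast_pow hk u).tsum_subtype_add_tsum_subtype_compl
    ({0} : Set ℤ)
  rwa [tsum_singleton (0 : ℤ) fun d => 1 / (u + d) ^ k, Int.cast_zero, add_zero, eq_comm] at hsplit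

lemma one_sub_mul_abs_intCast_le_norm_add {ρ : ℝ} {u : ℂ} (hu : |u.re| ≤ ρ) {d : ℤ} (hd : d ≠ 0) :
    (1 - ρ) * |(d : ℝ)| ≤ ‖u + d‖ := by
  have hd1 : (1 : ℝ) ≤ |(d : ℝ)| := by exact_mod_cast Int.one_le_abs hd
  calc (1 - ρ) * |(d : ℝ)| ≤ |(d : ℝ)| - |u.re| := by nlinarith [abs_nonneg u.re]
    _ ≤ |d + u.re| := by simpa using abs_sub_abs_le_abs_sub (d : ℝ) (-u.re)
    _ = |(u + d).re| := by simp [add_comm]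
    _ ≤ ‖u + d‖ := abs_re_le_norm _

lemma differentiableAt_latticeSumReg (hk : 1 < k) {u : ℂ} (hu : |u.re| < 1) :
    DifferentiableAt ℂ (latticeSumReg k) u := by
  obtain ⟨ρ, huρ, hρ⟩ := exists_between hu
  have hU : IsOpen {v : ℂ | |v.re| < ρ} :=
    isOpen_lt (continuous_abs.comp continuous_re) continuous_const
  have hpos (d : ({0}ᶜ : Set ℤ)) : 0 < (1 - ρ) * |((d : ℤ) : ℝ)| :=
    mul_pos (sub_pos.mpr hρ) (abs_pos.mpr (Int.cast_ne_zero.mpr d.2))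
  have hle {v : ℂ} (hv : |v.re| < ρ) (d : ({0}ᶜ : Set ℤ)) :
      (1 - ρ) * |((d : ℤ) : ℝ)| ≤ ‖v + (d : ℤ)‖ := one_sub_mul_abs_intCast_le_norm_add hv.le d.2
  have hsum : Summable fun d : ℤ => 1 / ((1 - ρ) * |(d : ℝ)|) ^ k := by
    have := (Real.summable_one_div_int_pow.mpr hk).abs.mul_left (1 / (1 - ρ) ^ k)
    simpa [mul_pow, abs_inv, mul_comm] using this
  refine (differentiableOn_tsum_of_summable_norm (hsum.comp_injective Subtype.val_injective)
    (fun d v hv => ?_) hU fun d v hv => ?_).differentiableAt (hU.mem_nhds huρ)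
  · have hne : v + (d : ℤ) ≠ 0 := norm_pos_iff.mp ((hpos d).trans_le (hle hv d))
    exact DifferentiableAt.differentiableWithinAt (by fun_prop (disch := exact pow_ne_zero _ hne))
  · rw [norm_div, norm_one, norm_pow]
    exact one_div_le_one_div_of_le (pow_pos (hpos d) k) (pow_le_pow_left₀ (hpos d).le (hle hv d) k)

lemma continuousAt_latticeSum (hk : 1 < k) {u : ℂ} (hu : |u.re| < 1) (hu0 : u ≠ 0) :
    ContinuousAt (latticeSum k) u := by
  rw [funext (latticeSum_eq_add_latticeSumReg hk)]
  have hpole : ContinuousAt (fun v : ℂ => 1 / v ^ k) u := by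
    fun_prop (disch := exact pow_ne_zero _ hu0)
  exact hpole.add (differentiableAt_latticeSumReg hk hu).continuousAt

end LatticeSum

section Decay

lemma norm_tsum_pow_mul_geometric_le {𝕜 : Type*} [RCLike 𝕜] {n : ℕ} (hn : n ≠ 0) {q : 𝕜} {r : ℝ}
    (hr0 : 0 < r) (hr1 : r < 1) (hq : ‖q‖ ≤ r) :
    ‖∑' m : ℕ, (m : 𝕜) ^ n * q ^ m‖ ≤ (∑' m : ℕ, (m : ℝ) ^ n * r ^ m) * (‖q‖ / r) := by
  have hsum : Summable fun m : ℕ => (m : ℝ) ^ n * r ^ m :=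
    summable_pow_mul_geometric_of_norm_lt_one n (by rwa [Real.norm_of_nonneg hr0.le])
  rw [← tsum_mul_right]
  refine tsum_of_norm_bounded (hsum.mul_right _).hasSum fun m => ?_
  rcases m with _ | m
  · simp [hn]
  · calc ‖((m + 1 : ℕ) : 𝕜) ^ n * q ^ (m + 1)‖
      _ = ((m + 1 : ℕ) : ℝ) ^ n * (‖q‖ ^ m * ‖q‖) := by
        rw [norm_mul, norm_pow, norm_pow, RCLike.norm_natCast, pow_succ ‖q‖]
      _ ≤ ((m + 1 : ℕ) : ℝ) ^ n * (r ^ m * ‖q‖) := by gcongr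
      _ = ((m + 1 : ℕ) : ℝ) ^ n * r ^ (m + 1) * (‖q‖ / r) := by rw [pow_succ r]; field_simp

lemma exists_norm_latticeSum_le_of_one_le_im {n : ℕ} (hn : 0 < n) :
    ∃ C : ℝ, ∀ u : ℂ, 1 ≤ u.im → ‖latticeSum (n + 1) u‖ ≤ C * Real.exp (-(2 * π * u.im)) := by
  set r : ℝ := Real.exp (-(2 * π)) with hr
  have hr1 : r < 1 := Real.exp_lt_one_iff.mpr (neg_neg_of_pos two_pi_pos)
  let A : ℂ := (-2 * π * I) ^ (n + 1) / n.factorial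
  refine ⟨‖A‖ * ((∑' m : ℕ, (m : ℝ) ^ n * r ^ m) / r), fun u hu => ?_⟩
  have hqnorm : ‖cexp (2 * π * I * u)‖ = Real.exp (-(2 * π * u.im)) := by simp [Complex.norm_exp]
  have hqr : ‖cexp (2 * π * I * u)‖ ≤ r := by
    rw [hqnorm, hr]
    exact Real.exp_le_exp.mpr (neg_le_neg (le_mul_of_one_le_right two_pi_pos.le hu))
  have hlipschitz : latticeSum (n + 1) u = A * ∑' m : ℕ, (m : ℂ) ^ n * cexp (2 * π * I * u) ^ m :=
    EisensteinSeries.qExpansion_identity hn ⟨u, one_pos.trans_le hu⟩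
  calc ‖latticeSum (n + 1) u‖
    _ = ‖A‖ * ‖∑' m : ℕ, (m : ℂ) ^ n * cexp (2 * π * I * u) ^ m‖ := by rw [hlipschitz, norm_mul]
    _ ≤ ‖A‖ * ((∑' m : ℕ, (m : ℝ) ^ n * r ^ m) * (‖cexp (2 * π * I * u)‖ / r)) := by
      gcongr
      exact norm_tsum_pow_mul_geometric_le hn.ne' (Real.exp_pos _) hr1 hqr
    _ = ‖A‖ * ((∑' m : ℕ, (m : ℝ) ^ n * r ^ m) / r) * Real.exp (-(2 * π * u.im)) := by
      rw [hqnorm]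
      ring

lemma exists_norm_latticeSum_le {n : ℕ} (hn : 0 < n) :
    ∃ C : ℝ, ∀ u : ℂ, 1 ≤ |u.im| →
      ‖latticeSum (n + 1) u‖ ≤ C * Real.exp (-(2 * π * |u.im|)) := by
  obtain ⟨C, hC⟩ := exists_norm_latticeSum_le_of_one_le_im hn
  refine ⟨C, fun u hu => ?_⟩
  rcases le_total 0 u.im with hnonneg | hnonpos
  · rw [abs_of_nonneg hnonneg] at hu ⊢
    exact hC u hu
  · rw [abs_of_nonpos hnonpos] at hu ⊢
    simpa [latticeSum_neg] using hC (-u) hu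

lemma exists_norm_eval_le_exp_norm {𝕜 : Type*} [NormedField 𝕜] (P : Polynomial 𝕜) :
    ∃ C : ℝ, ∀ u : 𝕜, ‖P.eval u‖ ≤ C * Real.exp ‖u‖ := by
  refine ⟨∑ k ∈ Finset.range (P.natDegree + 1), ‖P.coeff k‖ * k.factorial, fun u => ?_⟩
  rw [Polynomial.eval_eq_sum_range, Finset.sum_mul]
  refine norm_sum_le_of_le _ fun k _ => ?_
  rw [norm_mul, norm_pow, mul_assoc]
  gcongr
  exact (div_le_iff₀' (by positivity)).mp (Real.pow_div_factorial_le_exp _ (norm_nonneg u) k)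

lemma exists_norm_latticeSum_mul_eval_le {n : ℕ} (hn : 0 < n) (P : Polynomial ℂ) :
    ∃ C : ℝ, ∀ u : ℂ, |u.re| ≤ 1 → 1 ≤ |u.im| →
      ‖latticeSum (n + 1) u * P.eval u‖ ≤ C * Real.exp (-|u.im|) := by
  obtain ⟨A, hA⟩ := exists_norm_latticeSum_le hn
  obtain ⟨B, hB⟩ := exists_norm_eval_le_exp_norm P
  refine ⟨|A * B| * Real.exp 1, fun u hre him => ?_⟩
  have hexp : -(2 * π * |u.im|) + ‖u‖ ≤ 1 + -|u.im| := by
    nlinarith [norm_le_abs_re_add_abs_im u, Real.pi_gt_three]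
  calc ‖latticeSum (n + 1) u * P.eval u‖
    _ ≤ A * Real.exp (-(2 * π * |u.im|)) * (B * Real.exp ‖u‖) :=
      norm_mul_le_of_le (hA u him) (hB u)
    _ = A * B * Real.exp (-(2 * π * |u.im|) + ‖u‖) := by rw [Real.exp_add]; ring
    _ ≤ |A * B| * Real.exp (1 + -|u.im|) := by
      gcongr
      exact le_abs_self _
    _ = |A * B| * Real.exp 1 * Real.exp (-|u.im|) := by rw [Real.exp_add, mul_assoc]

end Decay

section ContourShift

variable {n : ℕ}

lemma integrable_latticeSum_mul_eval_vertical (hn : 0 < n) (P : Polynomial ℂ) {a : ℝ}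
    (ha : |a| < 1) (ha0 : a ≠ 0) :
    Integrable fun y : ℝ => latticeSum (n + 1) (a + y * I) * P.eval (a + y * I) := by
  obtain ⟨C, hC⟩ := exists_norm_latticeSum_mul_eval_le hn P
  refine integrable_of_norm_le_exp_neg_abs (C := C) (continuous_iff_continuousAt.mpr fun y => ?_)
    fun y hy => by simpa using hC (a + y * I) (by simpa using ha.le) (by simpa using hy)
  have hne : (a + y * I : ℂ) ≠ 0 := fun h => ha0 (by simpa using congrArg re h)
  exact ((continuousAt_latticeSum (Nat.succ_lt_succ hn) (by simpa using ha) hne).mul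
    P.continuousAt).comp (f := fun y : ℝ => (a + y * I : ℂ)) (by fun_prop)

lemma rectIntegral_latticeSum_mul_eval (hn : 0 < n) (P : Polynomial ℂ) {a b c d : ℝ}
    (ha : a ∈ Set.Ioo (-1) 0) (hb : b ∈ Set.Ioo 0 1) (hc : c < 0) (hd : 0 < d) :
    rectIntegral (fun u => latticeSum (n + 1) u * P.eval u) a b c d = 2 * π * I * P.coeff n := by
  have hk : 1 < n + 1 := Nat.succ_lt_succ hn
  have hstrip {u : ℂ} (hu : u.re ∈ Set.uIcc a b) : |u.re| < 1 := by
    rw [Set.uIcc_of_le (ha.2.trans hb.1).le] at hu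
    exact abs_lt.mpr ⟨ha.1.trans_le hu.1, hu.2.trans_lt hb.2⟩
  have hreg {u : ℂ} (hu : u.re ∈ Set.uIcc a b) :
      DifferentiableAt ℂ (fun v => latticeSumReg (n + 1) v * P.eval v) u :=
    (differentiableAt_latticeSumReg hk (hstrip hu)).mul P.differentiableAt
  have hsplit (u : ℂ) : latticeSum (n + 1) u * P.eval u =
      P.eval u / u ^ (n + 1) + latticeSumReg (n + 1) u * P.eval u := by
    rw [latticeSum_eq_add_latticeSumReg hk]
    ring
  have hpole : ContinuousOn (fun u => P.eval u / u ^ (n + 1)) (rectBoundary a b c d) :=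
    P.continuousOn.div (by fun_prop) fun _ hu =>
      pow_ne_zero _ (ne_zero_of_mem_rectBoundary ha.2.ne hb.1.ne' hc.ne hd.ne' hu)
  simp only [hsplit]
  rw [rectIntegral_add hpole fun u hu =>
      (hreg (re_mem_uIcc_of_mem_rectBoundary hu)).continuousAt.continuousWithinAt,
    rectIntegral_eval_div_pow ha.2 hb.1 hc hd, rectIntegral_eq_zero_of_differentiableOn
      fun u hu => (hreg hu.1).differentiableWithinAt, add_zero]

lemma integral_latticeSum_mul_eval_sub_eval_sub_one (hn : 0 < n) (P : Polynomial ℂ) {a : ℝ}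
    (ha : a ∈ Set.Ioo 0 1) :
    I * ∫ y : ℝ, latticeSum (n + 1) (a + y * I) *
      (P.eval (a + y * I) - P.eval (a + y * I - 1)) = 2 * π * I * P.coeff n := by
  obtain ⟨ha0, ha1⟩ := ha
  have hint_right := integrable_latticeSum_mul_eval_vertical hn P
    (abs_lt.mpr ⟨by linarith, ha1⟩) ha0.ne'
  have hint_left := integrable_latticeSum_mul_eval_vertical hn P
    (abs_lt.mpr ⟨by linarith, by linarith⟩ : |a - 1| < 1) (sub_neg.mpr ha1).ne
  obtain ⟨C, hC⟩ := exists_norm_latticeSum_mul_eval_le hn P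
  have hstrip {u : ℂ} (hu : u.re ∈ Set.uIcc (a - 1) a) : |u.re| ≤ 1 := by
    rw [Set.uIcc_of_le (sub_one_lt a).le] at hu
    exact abs_le.mpr ⟨by linarith [hu.1], by linarith [hu.2]⟩
  have hrect (R : ℝ) (hR : 0 < R) := rectIntegral_latticeSum_mul_eval hn P
    (⟨by linarith, by linarith⟩ : a - 1 ∈ Set.Ioo (-1) 0) ⟨ha0, ha1⟩ (neg_neg_of_pos hR) hR
  rw [← integral_vertical_sub_integral_vertical hint_left hint_right
      (tendsto_integral_horizontal_cocompact fun u hu => hC u (hstrip hu)) hrect,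
    ← mul_sub, ← integral_sub hint_right hint_left]
  congr with y
  have hshift : ((a - 1 : ℝ) + y * I : ℂ) = a + y * I - 1 := by push_cast; ring
  have hperiod := latticeSum_add_intCast (n + 1) (a + y * I) (-1)
  rw [Int.cast_neg, Int.cast_one, ← sub_eq_add_neg] at hperiod
  rw [hshift, hperiod, mul_sub]

lemma integrable_latticeSum_mul_sub_pow (hn : 0 < n) (w : ℕ) {a : ℝ} (ha : a ∈ Set.Ioo 0 1)
    (X : ℂ) : Integrable fun y : ℝ => latticeSum (n + 1) (I * y + a) * (X - I * y) ^ w := by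
  have := integrable_latticeSum_mul_eval_vertical hn
    ((Polynomial.C (a + X) - Polynomial.X) ^ w) (by rw [abs_of_pos ha.1]; exact ha.2) ha.1.ne'
  refine this.congr (.of_forall fun y => ?_)
  simp only [Polynomial.eval_pow, Polynomial.eval_sub, Polynomial.eval_C, Polynomial.eval_X]
  rw [add_sub_add_left_eq_sub, mul_comm I, add_comm (a : ℂ)]

lemma integral_latticeSum_mul_sub_pow {w : ℕ} (hn : 0 < n) (hnw : n ≤ w) {a : ℝ}
    (ha : a ∈ Set.Ioo 0 1) (X : ℂ) :
    I * ∫ y : ℝ, latticeSum (n + 1) (I * y + a) * (X - I * y) ^ w =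
      2 * π * I *
        ((-1) ^ (n + 1) * w.choose n * bpoly (w - n + 1) (a + X) / (w - n + 1)) := by
  rw [← coeff_bernoulliPrimitive hnw, ← integral_latticeSum_mul_eval_sub_eval_sub_one hn _ ha]
  congr with y
  rw [eval_bernoulliPrimitive_sub_eval_sub_one, add_sub_add_left_eq_sub, mul_comm I,
    add_comm (a : ℂ)]

end ContourShift

section HalfLines

lemma intI_const_mul (k : ℂ) (F : ℂ → ℂ) : intI (fun z => k * F z) = k * intI F := by
  rw [intI, intI, integral_const_mul, mul_left_comm]

lemma intI_add_intI_comp_neg {F : ℂ → ℂ} (hF : Integrable fun y : ℝ => F (I * y)) :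
    intI F + intI (fun z => F (-z)) = I * ∫ y : ℝ, F (I * y) := by
  have hneg := integral_comp_neg_Ioi (0 : ℝ) fun y : ℝ => F (I * y)
  simp only [ofReal_neg, mul_neg, neg_zero] at hneg
  rw [intI, intI, hneg, ← mul_add, add_comm,
    intervalIntegral.integral_Iic_add_Ioi hF.integrableOn hF.integrableOn]

end HalfLines

lemma cconst_mul_two_I_pow (w n : ℕ) :
    cconst w n * (2 * I) ^ (w + 1) = (-1) ^ n * 4 * π * I * w.choose n := by
  have hpow : (2 * I) ^ (-(w : ℤ) - 1) * (2 * I) ^ (w + 1) = 1 := by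
    rw [← zpow_natCast, ← zpow_add₀ (by simp)]
    simp
  rw [cconst]
  linear_combination ((-1) ^ n * 4 * π * I * w.choose n) * hpow

lemma intCast_div_natCast_notMem_range_intCast {D : ℕ} (hD : D ≠ 0) {h : ℤ}
    (hh : ¬ (D : ℤ) ∣ h) : (h / D : ℝ) ∉ Set.range ((↑) : ℤ → ℝ) := by
  rintro ⟨m, hm⟩
  rw [eq_div_iff (Nat.cast_ne_zero.mpr hD)] at hm
  exact hh ⟨m, by rw [mul_comm]; exact_mod_cast hm.symm⟩

theorem F1_eval_general {w n : ℕ} (hn : 0 < n) (hnw : n ≤ w) {x : ℝ}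
    (hx : x ∉ Set.range ((↑) : ℤ → ℝ)) (X : ℂ) :
    intI (fun z => 2 * (-1) ^ (n + 1) * latticeSum (n + 1) (z + x) * (X - z) ^ w) +
      (-1) ^ (n - 1) *
        intI (fun z => 2 * (-1) ^ (n + 1) * latticeSum (n + 1) (z - x) * (X + z) ^ w) =
    cconst w n * (-1) ^ n * (2 * I) ^ (w + 1) * bpoly (w - n + 1) (Int.fract x + X) /
      (w - n + 1) := by
  have hfract : Int.fract x ∈ Set.Ioo 0 1 :=
    ⟨(Int.fract_nonneg x).lt_of_ne' (mt Int.fract_eq_zero_iff.mp hx), Int.fract_lt_one x⟩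
  have hperiod (z : ℂ) : latticeSum (n + 1) (z + x) = latticeSum (n + 1) (z + Int.fract x) := by
    rw [← latticeSum_add_intCast _ (z + Int.fract x) ⌊x⌋, add_assoc, ← ofReal_intCast,
      ← ofReal_add, Int.fract_add_floor]
  let F : ℂ → ℂ := fun z => latticeSum (n + 1) (z + Int.fract x) * (X - z) ^ w
  have hsign : (-1 : ℂ) ^ (n + 1) * (-1) ^ (n + 1) = 1 := by rw [← mul_pow]; simp
  have hplus (z : ℂ) : 2 * (-1) ^ (n + 1) * latticeSum (n + 1) (z + x) * (X - z) ^ w =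
      2 * (-1) ^ (n + 1) * F z := by rw [hperiod, mul_assoc]
  have hminus (z : ℂ) : 2 * (-1) ^ (n + 1) * latticeSum (n + 1) (z - x) * (X + z) ^ w =
      2 * F (-z) := by
    rw [show z - x = -(-z + x) by ring, latticeSum_neg, hperiod, ← sub_neg_eq_add X z]
    linear_combination 2 * F (-z) * hsign
  have hpred : (-1 : ℂ) ^ (n - 1) = (-1) ^ (n + 1) := by
    obtain ⟨m, rfl⟩ := Nat.exists_eq_succ_of_ne_zero hn.ne'
    simp [pow_succ]
  have hline := (intI_add_intI_comp_neg (F := F)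
    (integrable_latticeSum_mul_sub_pow hn w hfract X)).trans
      (integral_latticeSum_mul_sub_pow hn hnw hfract X)
  simp only [hplus, hminus, intI_const_mul, hpred]
  linear_combination 2 * (-1) ^ (n + 1) * hline -
    (-1) ^ n * bpoly (w - n + 1) (Int.fract x + X) / (w - n + 1) * cconst_mul_two_I_pow w n

/-- the twisted period-polynomial contribution of the matrices with
`a = 0`: for `0 < n < w`, `D ∤ h`,
`F_{1,h}(X) = c_n·(−1)^n·(2i)^{w+1}·B_{ñ+1}({h/D} + X)/(ñ+1)`. -/
theorem F1_eval (w : ℕ) (hw : 2 ≤ w) (hwe : Even w) (n : ℕ) (hn0 : 0 < n) (hnw : n < w)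
    (D : ℕ) (hD : 1 < D) (h : ℤ) (hh : ¬ (D : ℤ) ∣ h) (X : ℂ) :
    intI (fun z => S1 D n h z * (X - z) ^ w) +
      (-1 : ℂ) ^ (n - 1) * intI (fun z => S1 D n (-h) z * (X + z) ^ w) =
    cconst w n * (-1) ^ n * (2 * Complex.I) ^ (w + 1) *
      bpoly (w - n + 1) (((Int.fract ((h : ℝ) / D) : ℝ) : ℂ) + X) / (w - n + 1) := by
  simpa [S1, latticeSum, neg_div, sub_eq_add_neg] using F1_eval_general hn0 hnw.le
    (intCast_div_natCast_notMem_range_intCast (Nat.ne_zero_of_lt hD) hh) X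

end
end
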